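/- Let f : X → Y be a surjective morphism of finite-dimensional smooth T-modules with Y cyclic, and let 𝔼[f] be the fiber product of X and 𝔼[Y] over Y. Then 𝔼[f] has degree one, its maximal finite-dimensional submodule κ(𝔼[f]) = 𝔼[f]^S is isomorphic to ker(f), and π_0(𝔼[f]) ≅ X. Conversely, every TS-module M of finite length and degree one is isomorphic to 𝔼[f] for the natural projection f : π_0(M) → π_0(M)/κ(M); in particular Y = π_0(M)/κ(M) satisfies dim Y^{T,χ} ≤ 1 for every smooth character χ of T. -/

import Mathlib

noncomputable section

open scoped Classical

namespace PSW

/-! ### The affine group `λ.b : x ↦ λ·x + b` over a field `K`. -/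

@[ext]
structure Aff (K : Type*) [Field K] where
  t : Kˣ
  s : K

namespace Aff

variable {K : Type*} [Field K]

instance : Mul (Aff K) := ⟨fun g h => ⟨g.t * h.t, g.s + (g.t : K) * h.s⟩⟩
instance : One (Aff K) := ⟨⟨1, 0⟩⟩
instance : Inv (Aff K) := ⟨fun g => ⟨g.t⁻¹, -(((g.t⁻¹ : Kˣ) : K) * g.s)⟩⟩

@[simp] lemma mul_t (g h : Aff K) : (g * h).t = g.t * h.t := rfl
@[simp] lemma mul_s (g h : Aff K) : (g * h).s = g.s + (g.t : K) * h.s := rfl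
@[simp] lemma one_t : (1 : Aff K).t = 1 := rfl
@[simp] lemma one_s : (1 : Aff K).s = 0 := rfl
@[simp] lemma inv_t (g : Aff K) : (g⁻¹).t = g.t⁻¹ := rfl
@[simp] lemma inv_s (g : Aff K) : (g⁻¹).s = -(((g.t⁻¹ : Kˣ) : K) * g.s) := rfl

instance : Group (Aff K) where
  mul_assoc a b c := by
    ext
    · simp [mul_assoc]
    · simp only [mul_s, mul_t, Units.val_mul]; ring
  one_mul a := by ext <;> simp
  mul_one a := by ext <;> simp
  inv_mul_cancel a := by
    ext
    · simp
    · simp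

/-- The element `x_λ` of the group `TS`. -/
def xT (u : Kˣ) : Aff K := ⟨u, 0⟩

/-- The element `s_b` of the group `TS`. -/
def sS (b : K) : Aff K := ⟨1, b⟩

@[simp] lemma xT_t (u : Kˣ) : (xT u : Aff K).t = u := rfl
@[simp] lemma xT_s (u : Kˣ) : (xT u : Aff K).s = 0 := rfl
@[simp] lemma sS_t (b : K) : (sS b : Aff K).t = 1 := rfl
@[simp] lemma sS_s (b : K) : (sS b : Aff K).s = b := rfl

/-- `T ≅ k^×` as a subgroup of `TS`. -/
def xTHom : Kˣ →* Aff K where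
  toFun := xT
  map_one' := rfl
  map_mul' u v := by ext <;> simp [xT]

@[simp] lemma xTHom_apply (u : Kˣ) : (xTHom u : Aff K) = xT u := rfl

lemma mul_sS (g : Aff K) (b : K) : g * sS b = sS ((g.t : K) * b) * g := by
  ext
  · simp
  · simp [add_comm]

lemma sS_mul (b : K) (g : Aff K) : sS b * g = g * sS (((g.t⁻¹ : Kˣ) : K) * b) := by
  ext
  · simp
  · simp [Units.mul_inv_cancel_left, add_comm]

lemma aff_decomp (g : Aff K) : g = xT g.t * sS (((g.t⁻¹ : Kˣ) : K) * g.s) := by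
  ext
  · simp
  · simp [Units.mul_inv_cancel_left]

instance [TopologicalSpace K] : TopologicalSpace (Aff K) :=
  TopologicalSpace.induced (fun g : Aff K => ((g.t, g.s) : Kˣ × K)) inferInstance

end Aff

/-! ### Generalities on representations of a monoid on complex vector spaces. -/

namespace GRep

variable {G : Type*} [Monoid G]

section MonoidModules

variable {V W : Type*} [AddCommMonoid V] [Module ℂ V] [AddCommMonoid W] [Module ℂ W]

/-- A submodule invariant under the representation. -/
def Invariant (ρ : Representation ℂ G V) (U : Submodule ℂ V) : Prop :=
  ∀ (g : G) (v : V), v ∈ U → ρ g v ∈ U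

/-- Equivariance of a linear map with respect to two representations. -/
def Equivariant (ρ : Representation ℂ G V) (σ : Representation ℂ G W) (f : V →ₗ[ℂ] W) : Prop :=
  ∀ (g : G) (v : V), f (ρ g v) = σ g (f v)

/-- Isomorphism of representations. -/
def Iso (ρ : Representation ℂ G V) (σ : Representation ℂ G W) : Prop :=
  ∃ e : V ≃ₗ[ℂ] W, ∀ (g : G) (v : V), e (ρ g v) = σ g (e v)

/-- Irreducibility. -/
def Irred (ρ : Representation ℂ G V) : Prop :=
  Nontrivial V ∧ ∀ U : Submodule ℂ V, Invariant ρ U → U = ⊥ ∨ U = ⊤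

/-- Subrepresentation on an invariant submodule. -/
def sub (ρ : Representation ℂ G V) {U : Submodule ℂ V} (hU : Invariant ρ U) :
    Representation ℂ G ↥U where
  toFun g := (ρ g).restrict fun v hv => hU g v hv
  map_one' := by
    apply LinearMap.ext; intro v; apply Subtype.ext
    simp [LinearMap.restrict_apply]
  map_mul' g h := by
    apply LinearMap.ext; intro v; apply Subtype.ext
    simp [LinearMap.restrict_apply]

@[simp] lemma sub_apply (ρ : Representation ℂ G V) {U : Submodule ℂ V} (hU : Invariant ρ U)
    (g : G) (v : ↥U) : ((sub ρ hU g v : ↥U) : V) = ρ g (v : V) := rfl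

lemma ker_invariant (ρ : Representation ℂ G V) (σ : Representation ℂ G W)
    (f : V →ₗ[ℂ] W) (hf : Equivariant ρ σ f) : Invariant ρ (LinearMap.ker f) := by
  intro g v hv
  rw [LinearMap.mem_ker] at hv ⊢
  rw [hf g v, hv, map_zero]

lemma range_invariant (ρ : Representation ℂ G V) (σ : Representation ℂ G W)
    (f : V →ₗ[ℂ] W) (hf : Equivariant ρ σ f) : Invariant σ (LinearMap.range f) := by
  rintro g w ⟨v, rfl⟩
  exact ⟨ρ g v, hf g v⟩

lemma map_invariant (ρ : Representation ℂ G V) (σ : Representation ℂ G W)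
    (f : V →ₗ[ℂ] W) (hf : Equivariant ρ σ f) (U : Submodule ℂ V) (hU : Invariant ρ U) :
    Invariant σ (U.map f) := by
  rintro g w ⟨v, hv, rfl⟩
  exact ⟨ρ g v, hU g v hv, hf g v⟩

end MonoidModules

section GroupModules

variable {V W : Type*} [AddCommGroup V] [Module ℂ V] [AddCommGroup W] [Module ℂ W]

/-- Quotient representation. -/
def quot (ρ : Representation ℂ G V) (U : Submodule ℂ V) (hU : Invariant ρ U) :
    Representation ℂ G (V ⧸ U) where
  toFun g := U.mapQ U (ρ g) fun v hv => hU g v hv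
  map_one' := by
    apply LinearMap.ext; intro x
    obtain ⟨v, rfl⟩ := Submodule.Quotient.mk_surjective U x
    simp [Submodule.mapQ_apply]
  map_mul' g h := by
    apply LinearMap.ext; intro x
    obtain ⟨v, rfl⟩ := Submodule.Quotient.mk_surjective U x
    simp [Submodule.mapQ_apply]

@[simp] lemma quot_apply (ρ : Representation ℂ G V) (U : Submodule ℂ V) (hU : Invariant ρ U)
    (g : G) (v : V) :
    quot ρ U hU g (Submodule.Quotient.mk v) = Submodule.Quotient.mk (ρ g v) := rfl

/-- Subquotient representation on `B/A`. -/
def subquot (ρ : Representation ℂ G V) {A B : Submodule ℂ V}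
    (hA : Invariant ρ A) (hB : Invariant ρ B) :
    Representation ℂ G (↥B ⧸ A.comap B.subtype) :=
  quot (sub ρ hB) (A.comap B.subtype) fun g v hv => hA g v.1 hv

lemma mkQ_equivariant (ρ : Representation ℂ G V) (U : Submodule ℂ V) (hU : Invariant ρ U) :
    Equivariant ρ (quot ρ U hU) U.mkQ := by
  intro g v
  show Submodule.Quotient.mk (ρ g v) = quot ρ U hU g (Submodule.Quotient.mk v)
  rw [quot_apply]

end GroupModules

end GRep

/-! ### TS-modules: representations of the affine group. -/

/-- A `TS`-module structure on `V` is a representation of the group `TS ≅ Gl_a(1)`. -/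
abbrev Rep (K : Type*) [Field K] (V : Type*) [AddCommGroup V] [Module ℂ V] :=
  Representation ℂ (Aff K) V

section RepDefs

open Aff

variable {K : Type*} [Field K]
variable {V W : Type*} [AddCommGroup V] [Module ℂ V] [AddCommGroup W] [Module ℂ W]

/-- Smoothness: every vector has open stabilizer. -/
def IsSmoothRep [TopologicalSpace K] (ρ : Rep K V) : Prop :=
  ∀ v : V, IsOpen {g : Aff K | ρ g v = v}

/-- Smoothness of a `T`-module, i.e. of a representation of `T ≅ k^×`. -/
def TIsSmooth {X : Type*} [AddCommMonoid X] [Module ℂ X] [TopologicalSpace K]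
    (τ : Representation ℂ Kˣ X) : Prop :=
  ∀ x : X, IsOpen {u : Kˣ | τ u x = x}

/-- Smooth character of `T ≅ k^×` (open kernel, equivalently locally constant). -/
def SmoothMulChar [TopologicalSpace K] (χ : Kˣ →* ℂˣ) : Prop :=
  IsOpen {u : Kˣ | χ u = 1}

/-- The space `V^S` of `S`-invariants. -/
def sInv (ρ : Rep K V) : Submodule ℂ V where
  carrier := {v | ∀ b : K, ρ (sS b) v = v}
  zero_mem' := fun b => map_zero _
  add_mem' {a b} ha hb := fun c => by rw [map_add, ha c, hb c]
  smul_mem' c v hv := fun b => by rw [map_smul, hv b]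

@[simp] lemma mem_sInv (ρ : Rep K V) (v : V) :
    v ∈ sInv ρ ↔ ∀ b : K, ρ (sS b) v = v := Iff.rfl

/-- The `χ`-eigenspace `X^{T,χ}` of a `T`-module. -/
def tEigenT {X : Type*} [AddCommMonoid X] [Module ℂ X]
    (τ : Representation ℂ Kˣ X) (χ : Kˣ →* ℂˣ) : Submodule ℂ X where
  carrier := {x | ∀ u : Kˣ, τ u x = (χ u : ℂ) • x}
  zero_mem' := fun u => by simp
  add_mem' {a b} ha hb := fun u => by rw [map_add, ha u, hb u, smul_add]
  smul_mem' c x hx := fun u => by rw [map_smul, hx u]; exact smul_comm c ((χ u : ℂ)) x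

@[simp] lemma mem_tEigenT {X : Type*} [AddCommMonoid X] [Module ℂ X]
    (τ : Representation ℂ Kˣ X) (χ : Kˣ →* ℂˣ) (x : X) :
    x ∈ tEigenT τ χ ↔ ∀ u : Kˣ, τ u x = (χ u : ℂ) • x := Iff.rfl

/-- The `χ`-eigenspace `V^{T,χ}` of a `TS`-module. -/
def tEigen (ρ : Rep K V) (χ : Kˣ →* ℂˣ) : Submodule ℂ V := tEigenT (ρ.comp xTHom) χ

/-- The kernel of the projection to the `S`-coinvariants `V_S`. -/
def sCoinvKer (ρ : Rep K V) : Submodule ℂ V :=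
  Submodule.span ℂ {w : V | ∃ (b : K) (v : V), w = ρ (sS b) v - v}

/-- The kernel of the projection to the twisted coinvariants `V_{S,ψ'}`. -/
def sTwistKer (ρ : Rep K V) (ψ' : AddChar K ℂ) : Submodule ℂ V :=
  Submodule.span ℂ {w : V | ∃ (b : K) (v : V), w = ρ (sS b) v - ψ' b • v}

/-- The kernel of the projection to the `χ`-coinvariants `X_{T,χ}` of a `T`-module. -/
def tTwistKerT {X : Type*} [AddCommGroup X] [Module ℂ X]
    (τ : Representation ℂ Kˣ X) (χ : Kˣ →* ℂˣ) : Submodule ℂ X :=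
  Submodule.span ℂ {w : X | ∃ (u : Kˣ) (x : X), w = τ u x - (χ u : ℂ) • x}

/-- The kernel of the projection to the `χ`-coinvariants `V_{T,χ}` of a `TS`-module. -/
def tTwistKer (ρ : Rep K V) (χ : Kˣ →* ℂˣ) : Submodule ℂ V := tTwistKerT (ρ.comp xTHom) χ

lemma sCoinvKer_invariant (ρ : Rep K V) : GRep.Invariant ρ (sCoinvKer ρ) := by
  intro g v hv
  have h : sCoinvKer ρ ≤ Submodule.comap (ρ g) (sCoinvKer ρ) := by
    refine Submodule.span_le.2 ?_
    rintro w ⟨b, v', rfl⟩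
    simp only [SetLike.mem_coe, Submodule.mem_comap, map_sub]
    have h1 : ρ g (ρ (sS b) v') = ρ (sS ((g.t : K) * b)) (ρ g v') := by
      rw [← Module.End.mul_apply, ← map_mul, mul_sS, map_mul, Module.End.mul_apply]
    rw [h1]
    exact Submodule.subset_span ⟨(g.t : K) * b, ρ g v', rfl⟩
  exact h hv

lemma sInv_invariant (ρ : Rep K V) : GRep.Invariant ρ (sInv ρ) := by
  intro g v hv
  rw [mem_sInv] at hv ⊢
  intro b
  have h1 : ρ (sS b) (ρ g v) = ρ g (ρ (sS (((g.t⁻¹ : Kˣ) : K) * b)) v) := by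
    rw [← Module.End.mul_apply, ← map_mul, sS_mul, map_mul, Module.End.mul_apply]
  rw [h1, hv _]

/-- The `S`-coinvariants `π₀(V) = V_S` as a `TS`-module (`S` acting trivially). -/
def piZeroRep (ρ : Rep K V) : Rep K (V ⧸ sCoinvKer ρ) :=
  GRep.quot ρ (sCoinvKer ρ) (sCoinvKer_invariant ρ)

/-- The `S`-coinvariants `π₀(V) = V_S` as a `T`-module. -/
def piZeroT (ρ : Rep K V) : Representation ℂ Kˣ (V ⧸ sCoinvKer ρ) :=
  (piZeroRep ρ).comp xTHom

/-- The `T`-module structure on `κ(V) = V^S`. -/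
def sInvT (ρ : Rep K V) : Representation ℂ Kˣ ↥(sInv ρ) :=
  (GRep.sub ρ (sInv_invariant ρ)).comp xTHom

/-- A `TS`-module is perfect if all its eigenspaces `V^{T,χ}` for smooth `χ` vanish. -/
def Perfect [TopologicalSpace K] (ρ : Rep K V) : Prop :=
  ∀ χ : Kˣ →* ℂˣ, SmoothMulChar χ → tEigen ρ χ = ⊥

/-- A finite-dimensional `T`-module is cyclic if each generalized eigenspace is a single
Jordan block; equivalently all eigenspaces `X^{T,χ}` have dimension at most one. -/
def TCyclic {X : Type*} [AddCommGroup X] [Module ℂ X]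
    (τ : Representation ℂ Kˣ X) : Prop :=
  ∀ χ : Kˣ →* ℂˣ, Module.finrank ℂ ↥(tEigenT τ χ) ≤ 1

lemma sCoinvKer_le_comap (ρ : Rep K V) (σ : Rep K W)
    (f : V →ₗ[ℂ] W) (hf : GRep.Equivariant ρ σ f) :
    sCoinvKer ρ ≤ (sCoinvKer σ).comap f := by
  refine Submodule.span_le.2 ?_
  rintro w ⟨b, v, rfl⟩
  simp only [SetLike.mem_coe, Submodule.mem_comap, map_sub]
  rw [hf]
  exact Submodule.subset_span ⟨b, f v, rfl⟩

/-- The map induced by an equivariant map on the `S`-coinvariants `π₀`. -/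
def piZeroMap (ρ : Rep K V) (σ : Rep K W) (f : V →ₗ[ℂ] W) (hf : GRep.Equivariant ρ σ f) :
    (V ⧸ sCoinvKer ρ) →ₗ[ℂ] (W ⧸ sCoinvKer σ) :=
  Submodule.mapQ _ _ f (sCoinvKer_le_comap ρ σ f hf)

lemma piZeroMap_equivariant (ρ : Rep K V) (σ : Rep K W) (f : V →ₗ[ℂ] W)
    (hf : GRep.Equivariant ρ σ f) :
    GRep.Equivariant (piZeroRep ρ) (piZeroRep σ) (piZeroMap ρ σ f hf) := by
  intro g x
  obtain ⟨v, rfl⟩ := Submodule.Quotient.mk_surjective _ x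
  show piZeroMap ρ σ f hf (piZeroRep ρ g (Submodule.Quotient.mk v))
      = piZeroRep σ g (piZeroMap ρ σ f hf (Submodule.Quotient.mk v))
  rw [show piZeroRep ρ g (Submodule.Quotient.mk v) = Submodule.Quotient.mk (ρ g v) from rfl]
  rw [show piZeroMap ρ σ f hf (Submodule.Quotient.mk v) = Submodule.Quotient.mk (f v) from rfl]
  rw [show piZeroMap ρ σ f hf (Submodule.Quotient.mk (ρ g v))
      = Submodule.Quotient.mk (f (ρ g v)) from rfl]
  rw [show piZeroRep σ g (Submodule.Quotient.mk (f v)) = Submodule.Quotient.mk (σ g (f v)) from rfl]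
  rw [hf]

lemma kappaImg_invariant (ρ : Rep K V) :
    GRep.Invariant (piZeroT ρ) ((sInv ρ).map (sCoinvKer ρ).mkQ) := by
  rintro u w ⟨v, hv, rfl⟩
  refine ⟨ρ (xT u) v, sInv_invariant ρ (xT u) v hv, ?_⟩
  rfl

end RepDefs

/-! ### Composition series and degree. -/

/-- A composition series for a `TS`-module, witnessing finite length: a maximal chain of
invariant submodules (the subquotients are then irreducible). -/
structure CompSeries {K : Type*} [Field K] {V : Type*} [AddCommGroup V] [Module ℂ V]
    (ρ : Rep K V) where
  n : ℕ
  W : ℕ → Submodule ℂ V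
  bot : W 0 = ⊥
  top : W n = ⊤
  inv : ∀ i, GRep.Invariant ρ (W i)
  lt : ∀ i < n, W i < W (i + 1)
  maximal : ∀ i < n, ∀ C : Submodule ℂ V, GRep.Invariant ρ C → W i ≤ C → C ≤ W (i + 1) →
    C = W i ∨ C = W (i + 1)

/-- The number of Jordan–Hölder constituents of a composition series isomorphic to a given
representation `σ` (applied with `σ = 𝕊`, this is the degree). -/
def CompSeries.deg {K : Type*} [Field K] {V : Type*} [AddCommGroup V] [Module ℂ V]
    {ρ : Rep K V} (c : CompSeries ρ) {W₀ : Type*} [AddCommMonoid W₀] [Module ℂ W₀]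
    (σ : Representation ℂ (Aff K) W₀) : ℕ :=
  (Finset.univ.filter fun i : Fin c.n =>
    GRep.Iso (GRep.subquot ρ (c.inv i.1) (c.inv (i.1 + 1))) σ).card

/-! ### Fiber products of a `T`-module with a `TS`-module over a `T`-module. -/

section Fiber

open Aff

variable {K : Type*} [Field K]
variable {X Y E : Type*} [AddCommGroup X] [Module ℂ X] [AddCommGroup Y] [Module ℂ Y]
  [AddCommGroup E] [Module ℂ E]

/-- The product `TS`-module `X × E` where `S` acts trivially on the `T`-module `X`. -/
def prodRepTE (τ : Representation ℂ Kˣ X) (ρ : Rep K E) : Rep K (X × E) where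
  toFun g := (τ g.t).prodMap (ρ g)
  map_one' := by
    apply LinearMap.ext; rintro ⟨x, v⟩
    simp
  map_mul' g h := by
    apply LinearMap.ext; rintro ⟨x, v⟩
    simp [map_mul]

/-- The underlying space of the fiber product `𝔼[f] = X ×_Y E`. -/
def fiberKer (f : X →ₗ[ℂ] Y) (q : E →ₗ[ℂ] Y) : Submodule ℂ (X × E) :=
  LinearMap.ker (f.comp (LinearMap.fst ℂ X E) - q.comp (LinearMap.snd ℂ X E))

lemma mem_fiberKer (f : X →ₗ[ℂ] Y) (q : E →ₗ[ℂ] Y) (p : X × E) :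
    p ∈ fiberKer f q ↔ f p.1 = q p.2 := by
  simp [fiberKer, sub_eq_zero]

lemma fiber_invariant (τX : Representation ℂ Kˣ X) (ρE : Rep K E)
    (τY : Representation ℂ Kˣ Y) (f : X →ₗ[ℂ] Y) (q : E →ₗ[ℂ] Y)
    (hf : ∀ (u : Kˣ) (x : X), f (τX u x) = τY u (f x))
    (hq : sCoinvKer ρE ≤ LinearMap.ker q)
    (hqT : ∀ (u : Kˣ) (v : E), q (ρE (xT u) v) = τY u (q v)) :
    GRep.Invariant (prodRepTE τX ρE) (fiberKer f q) := by
  intro g p hp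
  rw [mem_fiberKer] at hp ⊢
  have hsb : q (ρE (sS (((g.t⁻¹ : Kˣ) : K) * g.s)) p.2) = q p.2 := by
    have h1 : ρE (sS (((g.t⁻¹ : Kˣ) : K) * g.s)) p.2 - p.2 ∈ sCoinvKer ρE :=
      Submodule.subset_span ⟨_, _, rfl⟩
    have h2 := hq h1
    rw [LinearMap.mem_ker, map_sub, sub_eq_zero] at h2
    exact h2
  have hdecomp : ρE g p.2 = ρE (xT g.t) (ρE (sS (((g.t⁻¹ : Kˣ) : K) * g.s)) p.2) := by
    conv_lhs => rw [aff_decomp g]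
    rw [map_mul, Module.End.mul_apply]
  have h1 : ((prodRepTE τX ρE) g p).1 = τX g.t p.1 := rfl
  have h2 : ((prodRepTE τX ρE) g p).2 = ρE g p.2 := rfl
  rw [h1, h2, hf, hp, hdecomp, hqT, hsb]

end Fiber

/-! ### Jordan blocks of finite-dimensional `T`-modules. -/

section Jordan

variable {K : Type*} [Field K]
variable {X : Type*} [AddCommGroup X] [Module ℂ X]

/-- A Jordan block of a `T`-module: a nonzero indecomposable invariant direct summand. -/
def IsJordanBlock (τ : Representation ℂ Kˣ X) (J : Submodule ℂ X) : Prop :=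
  J ≠ ⊥ ∧ GRep.Invariant τ J ∧ (∃ C : Submodule ℂ X, GRep.Invariant τ C ∧ IsCompl J C) ∧
    ∀ A B : Submodule ℂ X, GRep.Invariant τ A → GRep.Invariant τ B → A ≤ J → B ≤ J →
      A ⊓ B = ⊥ → A ⊔ B = J → A = ⊥ ∨ B = ⊥

end Jordan

/-! ### Invariants and coinvariants for a normal subgroup of an arbitrary group. -/

section Grp

variable {Γ : Type*} [Group Γ]
variable {V W : Type*} [AddCommGroup V] [Module ℂ V] [AddCommGroup W] [Module ℂ W]

/-- Invariants `V^N` under a subgroup `N`. -/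
def grpInv (ρ : Representation ℂ Γ V) (N : Subgroup Γ) : Submodule ℂ V where
  carrier := {v | ∀ n ∈ N, ρ n v = v}
  zero_mem' := fun n _ => map_zero _
  add_mem' {a b} ha hb := fun n hn => by rw [map_add, ha n hn, hb n hn]
  smul_mem' c v hv := fun n hn => by rw [map_smul, hv n hn]

@[simp] lemma mem_grpInv (ρ : Representation ℂ Γ V) (N : Subgroup Γ) (v : V) :
    v ∈ grpInv ρ N ↔ ∀ n ∈ N, ρ n v = v := Iff.rfl

/-- The kernel of the projection to the coinvariants `V_N` under a subgroup `N`. -/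
def grpCoinvKer (ρ : Representation ℂ Γ V) (N : Subgroup Γ) : Submodule ℂ V :=
  Submodule.span ℂ {w : V | ∃ n ∈ N, ∃ v : V, w = ρ n v - v}

lemma grpInv_invariant (ρ : Representation ℂ Γ V) (N : Subgroup Γ) [hN : N.Normal] :
    GRep.Invariant ρ (grpInv ρ N) := by
  intro γ v hv
  rw [mem_grpInv] at hv ⊢
  intro n hn
  have hmem : γ⁻¹ * n * γ ∈ N := by
    have := hN.conj_mem n hn γ⁻¹
    simpa using this
  have key : ρ n (ρ γ v) = ρ γ (ρ (γ⁻¹ * n * γ) v) := by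
    rw [← Module.End.mul_apply, ← map_mul, ← Module.End.mul_apply, ← map_mul]
    congr 1
    group
  rw [key, hv _ hmem]

lemma grpCoinvKer_invariant (ρ : Representation ℂ Γ V) (N : Subgroup Γ) [hN : N.Normal] :
    GRep.Invariant ρ (grpCoinvKer ρ N) := by
  intro γ v hv
  have h : grpCoinvKer ρ N ≤ Submodule.comap (ρ γ) (grpCoinvKer ρ N) := by
    refine Submodule.span_le.2 ?_
    rintro w ⟨n, hn, v', rfl⟩
    simp only [SetLike.mem_coe, Submodule.mem_comap, map_sub]
    have key : ρ γ (ρ n v') = ρ (γ * n * γ⁻¹) (ρ γ v') := by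
      rw [← Module.End.mul_apply, ← map_mul, ← Module.End.mul_apply, ← map_mul]
      congr 1
      group
    rw [key]
    exact Submodule.subset_span ⟨γ * n * γ⁻¹, hN.conj_mem n hn γ, ρ γ v', rfl⟩
  exact h hv

/-- The map induced on `N`-invariants by an equivariant map. -/
def grpInvRestrict (ρ : Representation ℂ Γ V) (σ : Representation ℂ Γ W) (N : Subgroup Γ)
    (f : V →ₗ[ℂ] W) (hf : GRep.Equivariant ρ σ f) : ↥(grpInv ρ N) →ₗ[ℂ] ↥(grpInv σ N) :=
  f.restrict (fun v hv => by
    rw [mem_grpInv] at hv ⊢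
    intro n hn
    rw [← hf n v, hv n hn])

lemma grpCoinvKer_le_comap (ρ : Representation ℂ Γ V) (σ : Representation ℂ Γ W) (N : Subgroup Γ)
    (f : V →ₗ[ℂ] W) (hf : GRep.Equivariant ρ σ f) :
    grpCoinvKer ρ N ≤ (grpCoinvKer σ N).comap f := by
  refine Submodule.span_le.2 ?_
  rintro w ⟨n, hn, v, rfl⟩
  simp only [SetLike.mem_coe, Submodule.mem_comap, map_sub]
  rw [hf]
  exact Submodule.subset_span ⟨n, hn, f v, rfl⟩

/-- The map induced on `N`-coinvariants by an equivariant map. -/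
def grpCoinvMap (ρ : Representation ℂ Γ V) (σ : Representation ℂ Γ W) (N : Subgroup Γ)
    (f : V →ₗ[ℂ] W) (hf : GRep.Equivariant ρ σ f) :
    (V ⧸ grpCoinvKer ρ N) →ₗ[ℂ] (W ⧸ grpCoinvKer σ N) :=
  Submodule.mapQ _ _ f (grpCoinvKer_le_comap ρ σ N f hf)

end Grp

/-! ### Tate L-factors of finite-dimensional `T`-modules. -/

section Lfactor

variable {K : Type*} [NontriviallyNormedField K]
variable {X : Type*} [AddCommGroup X] [Module ℂ X]

/-- The part of a `T`-module where the `χ`-twisted action is unramified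
(trivial on the norm-one units). -/
def unrPart (τ : Representation ℂ Kˣ X) (χ : Kˣ →* ℂˣ) : Submodule ℂ X where
  carrier := {x | ∀ u : Kˣ, ‖(u : K)‖ = 1 → (χ u : ℂ) • τ u x = x}
  zero_mem' := fun u _ => by simp
  add_mem' {a b} ha hb := fun u hu => by rw [map_add, smul_add, ha u hu, hb u hu]
  smul_mem' c x hx := fun u hu => by
    rw [map_smul, smul_comm, hx u hu]

lemma unrPart_stable (τ : Representation ℂ Kˣ X) (χ : Kˣ →* ℂˣ) (ϖ : Kˣ) :
    ∀ x ∈ unrPart τ χ, ((χ ϖ : ℂ) • τ ϖ) x ∈ unrPart τ χ := by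
  intro x hx u hu
  have comm : τ u (τ ϖ x) = τ ϖ (τ u x) := by
    rw [← Module.End.mul_apply, ← map_mul, mul_comm, map_mul, Module.End.mul_apply]
  calc (χ u : ℂ) • τ u (((χ ϖ : ℂ) • τ ϖ) x)
      = (χ ϖ : ℂ) • ((χ u : ℂ) • τ u (τ ϖ x)) := by
        rw [LinearMap.smul_apply, map_smul, smul_comm]
    _ = (χ ϖ : ℂ) • τ ϖ ((χ u : ℂ) • τ u x) := by rw [comm, map_smul]
    _ = ((χ ϖ : ℂ) • τ ϖ) x := by rw [hx u hu, LinearMap.smul_apply]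

/-- The twisted uniformizer action on the unramified part. -/
def twistOp (τ : Representation ℂ Kˣ X) (χ : Kˣ →* ℂˣ) (ϖ : Kˣ) :
    ↥(unrPart τ χ) →ₗ[ℂ] ↥(unrPart τ χ) :=
  LinearMap.restrict ((χ ϖ : ℂ) • τ ϖ) (unrPart_stable τ χ ϖ)

/-- The Tate `L`-factor `L(s, χ ⊗ X) = det(1 - q^{-s}·(χ·τ)(ϖ) | X^{unr,χ})⁻¹` of a
(finite-dimensional) `T`-module `X`, relative to a uniformizer `ϖ`. -/
def Lfactor (τ : Representation ℂ Kˣ X) (χ : Kˣ →* ℂˣ) (ϖ : Kˣ) (s : ℂ) : ℂ :=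
  (LinearMap.det (LinearMap.id - (‖(ϖ : K)‖ : ℂ) ^ s • twistOp τ χ ϖ))⁻¹

end Lfactor

/-! ### The concrete `TS`-modules `𝕊`, `C_c^∞(k)`, `C_b^∞(k^×)` and `𝔼[χ]`. -/

section Concrete

open Aff

variable (K : Type*) [NontriviallyNormedField K]

/-- The representation of `TS` on functions on `k^×`:
`(s_b g)(x) = ψ(bx) g(x)`, `(x_λ g)(x) = g(xλ)`. -/
def repCx (ψ : AddChar K ℂ) : Rep K (Kˣ → ℂ) where
  toFun g :=
    { toFun := fun f x => ψ (g.s * (x : K)) * f (x * g.t)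
      map_add' := fun f₁ f₂ => by funext x; simp [mul_add]
      map_smul' := fun c f => by
        funext x
        simp only [Pi.smul_apply, smul_eq_mul, RingHom.id_apply]
        ring }
  map_one' := by
    apply LinearMap.ext; intro f; funext x
    simp
  map_mul' g h := by
    apply LinearMap.ext; intro f; funext x
    show ψ ((g.s + (g.t : K) * h.s) * (x : K)) * f (x * (g.t * h.t))
        = ψ (g.s * (x : K)) * (ψ (h.s * ((x * g.t : Kˣ) : K)) * f (x * g.t * h.t))
    have harg : (g.s + (g.t : K) * h.s) * (x : K)
        = g.s * (x : K) + h.s * ((x * g.t : Kˣ) : K) := by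
      push_cast
      ring
    rw [harg, AddChar.map_add_eq_mul, ← mul_assoc x g.t h.t]
    ring

@[simp] lemma repCx_apply (ψ : AddChar K ℂ) (g : Aff K) (f : Kˣ → ℂ) (x : Kˣ) :
    repCx K ψ g f x = ψ (g.s * (x : K)) * f (x * g.t) := rfl

/-- The `χ`-twisted representation of `TS` on functions on `k`:
`(s_b g)(x) = ψ(bx) g(x)`, `(x_λ g)(x) = χ(λ) g(xλ)`.  (Take `χ = 1` for the
untwisted action on `C_c^∞(k)`; the module `𝔼[χ]` is `C_c^∞(k)` with the twisted action.) -/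
def repCc (ψ : AddChar K ℂ) (χ : Kˣ →* ℂˣ) : Rep K (K → ℂ) where
  toFun g :=
    { toFun := fun f x => (χ g.t : ℂ) * ψ (g.s * x) * f (x * (g.t : K))
      map_add' := fun f₁ f₂ => by funext x; simp [mul_add]
      map_smul' := fun c f => by
        funext x
        simp only [Pi.smul_apply, smul_eq_mul, RingHom.id_apply]
        ring }
  map_one' := by
    apply LinearMap.ext; intro f; funext x
    simp
  map_mul' g h := by
    apply LinearMap.ext; intro f; funext x
    show (χ (g.t * h.t) : ℂ) * ψ ((g.s + (g.t : K) * h.s) * x) * f (x * ((g.t * h.t : Kˣ) : K))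
        = (χ g.t : ℂ) * ψ (g.s * x) * ((χ h.t : ℂ) * ψ (h.s * (x * (g.t : K)))
            * f (x * (g.t : K) * (h.t : K)))
    have harg : (g.s + (g.t : K) * h.s) * x = g.s * x + h.s * (x * (g.t : K)) := by ring
    have harg2 : x * ((g.t * h.t : Kˣ) : K) = x * (g.t : K) * (h.t : K) := by
      push_cast
      ring
    rw [harg, harg2, AddChar.map_add_eq_mul, map_mul]
    push_cast
    ring

@[simp] lemma repCc_apply (ψ : AddChar K ℂ) (χ : Kˣ →* ℂˣ) (g : Aff K) (f : K → ℂ) (x : K) :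
    repCc K ψ χ g f x = (χ g.t : ℂ) * ψ (g.s * x) * f (x * (g.t : K)) := rfl

/-- The one-dimensional `TS`-module `ℂ_χ` on which `S` acts trivially and `x_λ` by `χ(λ)`. -/
def chiRep (χ : Kˣ →* ℂˣ) : Rep K ℂ where
  toFun g := (χ g.t : ℂ) • LinearMap.id
  map_one' := by
    apply LinearMap.ext; intro c
    simp
  map_mul' g h := by
    apply LinearMap.ext; intro c
    simp only [mul_t, map_mul, LinearMap.smul_apply, LinearMap.id_apply, Module.End.mul_apply,
      Units.val_mul, smul_eq_mul]
    ring

/-- `C_c^∞(k)`: locally constant, compactly supported functions on `k`. -/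
def CcK : Submodule ℂ (K → ℂ) where
  carrier := {f | IsLocallyConstant f ∧ HasCompactSupport f}
  zero_mem' := ⟨IsLocallyConstant.const 0, by
    rw [hasCompactSupport_def]
    simp⟩
  add_mem' {a b} ha hb := ⟨ha.1.comp₂ hb.1 (· + ·), ha.2.add hb.2⟩
  smul_mem' c f hf := by
    refine ⟨?_, hf.2.mono (Function.support_const_smul_subset c f)⟩
    exact hf.1.comp (fun z => c * z)

@[simp] lemma mem_CcK (f : K → ℂ) :
    f ∈ CcK K ↔ IsLocallyConstant f ∧ HasCompactSupport f := Iff.rfl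

/-- `𝕊 = C_c^∞(k^×)`: locally constant, compactly supported functions on `k^×`. -/
def SSx : Submodule ℂ (Kˣ → ℂ) where
  carrier := {f | IsLocallyConstant f ∧ HasCompactSupport f}
  zero_mem' := ⟨IsLocallyConstant.const 0, by
    rw [hasCompactSupport_def]
    simp⟩
  add_mem' {a b} ha hb := ⟨ha.1.comp₂ hb.1 (· + ·), ha.2.add hb.2⟩
  smul_mem' c f hf := by
    refine ⟨?_, hf.2.mono (Function.support_const_smul_subset c f)⟩
    exact hf.1.comp (fun z => c * z)

@[simp] lemma mem_SSx (f : Kˣ → ℂ) :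
    f ∈ SSx K ↔ IsLocallyConstant f ∧ HasCompactSupport f := Iff.rfl

/-- `C_b^∞(k^×)`: locally constant functions on `k^×` whose support has compact closure
in `k`. -/
def Cb : Submodule ℂ (Kˣ → ℂ) where
  carrier := {f | IsLocallyConstant f ∧
    IsCompact (closure (((↑) : Kˣ → K) '' Function.support f))}
  zero_mem' := ⟨IsLocallyConstant.const 0, by simp⟩
  add_mem' {a b} ha hb := by
    refine ⟨ha.1.comp₂ hb.1 (· + ·), ?_⟩
    refine IsCompact.of_isClosed_subset (ha.2.union hb.2) isClosed_closure ?_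
    refine closure_minimal ?_ (ha.2.isClosed.union hb.2.isClosed)
    refine (Set.image_mono (Function.support_add _ _)).trans ?_
    rw [Set.image_union]
    exact Set.union_subset_union subset_closure subset_closure
  smul_mem' c f hf := by
    refine ⟨hf.1.comp (fun z => c * z), ?_⟩
    refine IsCompact.of_isClosed_subset hf.2 isClosed_closure ?_
    refine closure_mono ?_
    exact Set.image_mono (Function.support_const_smul_subset c f)

@[simp] lemma mem_Cb (f : Kˣ → ℂ) :
    f ∈ Cb K ↔ IsLocallyConstant f ∧
      IsCompact (closure (((↑) : Kˣ → K) '' Function.support f)) := Iff.rfl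

variable {K}

lemma SSx_invariant (ψ : AddChar K ℂ) (hψlc : IsLocallyConstant (⇑ψ)) :
    GRep.Invariant (repCx K ψ) (SSx K) := by
  rintro g f hf
  rw [mem_SSx] at hf ⊢
  obtain ⟨hlc, hcs⟩ := hf
  have heq : repCx K ψ g f
      = (fun x : Kˣ => ψ (g.s * (x : K))) * (f ∘ (Homeomorph.mulRight g.t)) := rfl
  constructor
  · rw [heq]
    refine IsLocallyConstant.mul ?_ ?_
    · exact hψlc.comp_continuous (continuous_const.mul Units.continuous_val)
    · exact hlc.comp_continuous (Homeomorph.mulRight g.t).continuous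
  · rw [heq]
    exact (hcs.comp_homeomorph (Homeomorph.mulRight g.t)).mul_left

lemma CcK_invariant (ψ : AddChar K ℂ) (hψlc : IsLocallyConstant (⇑ψ)) (χ : Kˣ →* ℂˣ) :
    GRep.Invariant (repCc K ψ χ) (CcK K) := by
  rintro g f hf
  rw [mem_CcK] at hf ⊢
  obtain ⟨hlc, hcs⟩ := hf
  have hne : ((g.t : Kˣ) : K) ≠ 0 := g.t.ne_zero
  have heq : repCc K ψ χ g f
      = (fun x : K => (χ g.t : ℂ) * ψ (g.s * x)) * (f ∘ (Homeomorph.mulRight₀ (g.t : K) hne)) :=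
    rfl
  constructor
  · rw [heq]
    refine IsLocallyConstant.mul ?_ ?_
    · exact ((hψlc.comp_continuous (continuous_const.mul continuous_id)).comp
        (fun z => (χ g.t : ℂ) * z))
    · exact hlc.comp_continuous (Homeomorph.mulRight₀ (g.t : K) hne).continuous
  · rw [heq]
    exact (hcs.comp_homeomorph (Homeomorph.mulRight₀ (g.t : K) hne)).mul_left

/-- The `TS`-module `𝕊 = C_c^∞(k^×)`. -/
def SRep (ψ : AddChar K ℂ) (hψlc : IsLocallyConstant (⇑ψ)) : Rep K ↥(SSx K) :=
  GRep.sub (repCx K ψ) (SSx_invariant ψ hψlc)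

/-- The `TS`-module `𝔼[χ]`, i.e. `C_c^∞(k)` with the `χ`-twisted action. -/
def ERep (ψ : AddChar K ℂ) (hψlc : IsLocallyConstant (⇑ψ)) (χ : Kˣ →* ℂˣ) : Rep K ↥(CcK K) :=
  GRep.sub (repCc K ψ χ) (CcK_invariant ψ hψlc χ)

/-- The `TS`-module `𝕊^s`, a direct sum of `s` copies of `𝕊`. -/
def SRepPow (ψ : AddChar K ℂ) (hψlc : IsLocallyConstant (⇑ψ)) (s : ℕ) :
    Rep K (Fin s → ↥(SSx K)) where
  toFun g := LinearMap.pi fun i => (SRep ψ hψlc g).comp (LinearMap.proj i)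
  map_one' := by
    apply LinearMap.ext; intro v; funext i
    simp
  map_mul' g h := by
    apply LinearMap.ext; intro v; funext i
    simp [map_mul]

/-- The submodule `E` of `C_b^∞(k^×)` consisting of functions which are `χ`-eigenvectors
modulo `𝕊`; the quotient `E/𝕊` is the `χ`-eigenspace of `C_b^∞(k^×)/𝕊`. -/
def quotEigen (ψ : AddChar K ℂ) (χ : Kˣ →* ℂˣ) : Submodule ℂ (Kˣ → ℂ) where
  carrier := {f | f ∈ Cb K ∧ ∀ u : Kˣ, repCx K ψ (Aff.xT u) f - (χ u : ℂ) • f ∈ SSx K}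
  zero_mem' := ⟨(Cb K).zero_mem, fun u => by simpa using (SSx K).zero_mem⟩
  add_mem' {a b} ha hb := by
    refine ⟨(Cb K).add_mem ha.1 hb.1, fun u => ?_⟩
    rw [map_add, smul_add, add_sub_add_comm]
    exact (SSx K).add_mem (ha.2 u) (hb.2 u)
  smul_mem' c f hf := by
    refine ⟨(Cb K).smul_mem c hf.1, fun u => ?_⟩
    rw [map_smul, smul_comm, ← smul_sub]
    exact (SSx K).smul_mem c (hf.2 u)

/-- Evaluation at `0 ∈ k`, realizing the quotient map `𝔼[χ] → ℂ_χ` with kernel `𝕊`. -/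
def ev0 : ↥(CcK K) →ₗ[ℂ] ℂ where
  toFun f := (f : K → ℂ) 0
  map_add' f g := rfl
  map_smul' c f := rfl

end Concrete

/-! ### The diagonal torus in GL(2). -/

section GL2

variable {K : Type*} [Field K]

/-- The diagonal element `diag(a, b)` of `GL(2, K)`. -/
def diagGL (a b : Kˣ) : Matrix.GeneralLinearGroup (Fin 2) K where
  val := Matrix.diagonal ![(a : K), (b : K)]
  inv := Matrix.diagonal ![((a : K))⁻¹, ((b : K))⁻¹]
  val_inv := by
    ext i j
    fin_cases i <;> fin_cases j <;>
      simp [Matrix.mul_apply, Fin.sum_univ_two, Matrix.diagonal, Matrix.one_apply,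
        a.ne_zero, b.ne_zero]
  inv_val := by
    ext i j
    fin_cases i <;> fin_cases j <;>
      simp [Matrix.mul_apply, Fin.sum_univ_two, Matrix.diagonal, Matrix.one_apply,
        a.ne_zero, b.ne_zero]

end GL2

/-! Let `M` have degree one. A `ψ`-Whittaker functional `Λ` gives the Kirillov map
`v ↦ (λ ↦ Λ (x_λ v))`, whose kernel is `κ(M)` and which sends the kernel of `M → π₀(M)` onto `𝕊`.
So the germ at `0` of the image of `v` depends only on the class of `v` in `π₀(M)`; by smoothness
and finite dimension it is the germ of a matrix coefficient `λ ↦ L (x_λ y)`. Hence `M` is recovered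
inside `π₀(M) × C^∞(k^×)` as the pairs `(y, φ)` for which `φ` has the germ of the coefficient of
`y`, and `y` has zero coefficient exactly when it comes from `κ(M)`: on `π₀(M)/κ(M)` the functional
`L` vanishes on no nonzero `T`-submodule, which forces cyclicity. Two functionals whose coefficients
have the same kernel differ by a `T`-automorphism of `π₀(M)`, and this identifies `M` with the fiber
product. -/

section Smooth

open Filter Topology Aff

variable {V : Type*} [AddCommGroup V] [Module ℂ V]

section Monoid

variable {G H : Type*} [Monoid G] [TopologicalSpace G] [Monoid H] [TopologicalSpace H]

/-- A representation of a topological monoid is smooth if every vector is fixed by all elements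
close to `1`. For a group this says that stabilizers are open. -/
def Smooth (σ : Representation ℂ G V) : Prop :=
  ∀ v, ∀ᶠ g in 𝓝 1, σ g v = v

/-- The vectors fixed by all elements close to `1`. -/
def smoothVectors (σ : Representation ℂ G V) : Submodule ℂ V where
  carrier := {v | ∀ᶠ g in 𝓝 1, σ g v = v}
  zero_mem' := by simp
  add_mem' hv hw := by
    filter_upwards [hv, hw] with g hgv hgw
    rw [map_add, hgv, hgw]
  smul_mem' c v hv := by
    filter_upwards [hv] with g hg
    rw [map_smul, hg]

lemma Smooth.map_mem_smoothVectors {W : Type*} [AddCommGroup W] [Module ℂ W]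
    {σ : Representation ℂ G V} {σ' : Representation ℂ G W} {f : V →ₗ[ℂ] W} (hσ : Smooth σ)
    (hf : GRep.Equivariant σ σ' f) (v : V) : f v ∈ smoothVectors σ' := by
  filter_upwards [hσ v] with g hg
  rw [← hf, hg]

lemma Smooth.comp {σ : Representation ℂ G V} (hσ : Smooth σ) (φ : H →* G) (hφ : Continuous φ) :
    Smooth (σ.comp φ) := by
  intro v
  have hφ1 : Tendsto φ (𝓝 1) (𝓝 1) := by simpa using hφ.tendsto 1
  exact hφ1.eventually (hσ v)

lemma Smooth.sub {σ : Representation ℂ G V} (hσ : Smooth σ) {U : Submodule ℂ V}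
    (hU : GRep.Invariant σ U) : Smooth (GRep.sub σ hU) :=
  fun v ↦ (hσ v).mono fun _ hg ↦ Subtype.ext hg

lemma Smooth.quot {σ : Representation ℂ G V} (hσ : Smooth σ) {U : Submodule ℂ V}
    (hU : GRep.Invariant σ U) : Smooth (GRep.quot σ U hU) := by
  intro x
  obtain ⟨v, rfl⟩ := Submodule.Quotient.mk_surjective U x
  filter_upwards [hσ v] with g hg
  rw [GRep.quot_apply, hg]

end Monoid

variable {K : Type*} [Field K]

/-- The embedding `b ↦ s_b` of the additive group of `K` into `TS`. -/
def sSHom : Multiplicative K →* Aff K where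
  toFun b := sS b.toAdd
  map_one' := rfl
  map_mul' b c := by ext <;> simp

variable [TopologicalSpace K]

lemma IsSmoothRep.smooth {ρ : Rep K V} (hρ : IsSmoothRep ρ) : Smooth ρ :=
  fun v ↦ (hρ v).mem_nhds (by simp)

lemma continuous_xTHom : Continuous (xTHom : Kˣ →* Aff K) :=
  continuous_induced_rng.2 (continuous_id.prodMk continuous_const)

lemma continuous_sSHom : Continuous (sSHom : Multiplicative K →* Aff K) :=
  continuous_induced_rng.2 (continuous_const.prodMk continuous_toAdd)

variable {ρ : Rep K V} {v : V}

lemma eventually_sS_of_mem_smoothVectors (hv : v ∈ smoothVectors ρ) :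
    ∀ᶠ b in 𝓝 (0 : K), ρ (sS b) v = v :=
  (continuous_sSHom.tendsto' 1 1 (map_one _)).eventually hv

lemma eventually_xT_of_mem_smoothVectors (hv : v ∈ smoothVectors ρ) :
    ∀ᶠ x in 𝓝 (1 : Kˣ), ρ (xT x) v = v :=
  (continuous_xTHom.tendsto' 1 1 (map_one _)).eventually hv

end Smooth

section Averaging

variable {G V : Type*} [CommGroup G] [AddCommGroup V] [Module ℂ V]
variable (σ : Representation ℂ G V) (N H : Subgroup G)

/-- The sum of the operators `σ n`, where `n` runs over representatives of `N / (H ⊓ N)`. On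
`H`-invariants it is the index times the projection to `N`-invariants along `grpCoinvKer σ N`. -/
def cosetSum : V →ₗ[ℂ] V :=
  ∑ᶠ q : N ⧸ H.subgroupOf N, σ (q.out : N)

variable {σ N H}

lemma cosetSum_apply [Fintype (N ⧸ H.subgroupOf N)] (v : V) :
    cosetSum σ N H v = ∑ q : N ⧸ H.subgroupOf N, σ (q.out : N) v := by
  rw [cosetSum, finsum_eq_sum_of_fintype, LinearMap.sum_apply]

lemma cosetSum_apply_translate [H.IsFiniteRelIndex N] {v : V} (hv : v ∈ grpInv σ H) {n : G}
    (hn : n ∈ N) : cosetSum σ N H (σ n v) = cosetSum σ N H v := by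
  have := Fintype.ofFinite (N ⧸ H.subgroupOf N)
  let n' : N ⧸ H.subgroupOf N := QuotientGroup.mk ⟨n, hn⟩
  have representative_mul (q : N ⧸ H.subgroupOf N) :
      σ (q.out : N) (σ n v) = σ ((q * n').out : N) v := by
    have hq : (QuotientGroup.mk (q * n').out : N ⧸ H.subgroupOf N)
        = QuotientGroup.mk (q.out * ⟨n, hn⟩) := by
      rw [QuotientGroup.out_eq', QuotientGroup.mk_mul, QuotientGroup.out_eq']
    rw [QuotientGroup.eq, Subgroup.mem_subgroupOf] at hq
    conv_rhs => rw [← hv _ hq]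
    simp only [← Module.End.mul_apply, ← map_mul]
    simp
  rw [cosetSum_apply, cosetSum_apply, Finset.sum_congr rfl fun q _ ↦ representative_mul q]
  exact Equiv.sum_comp (Equiv.mulRight n') fun q ↦ σ (q.out : N) v

lemma cosetSum_mem_grpInv [H.IsFiniteRelIndex N] {v : V} (hv : v ∈ grpInv σ H) :
    cosetSum σ N H v ∈ grpInv σ N := by
  have := Fintype.ofFinite (N ⧸ H.subgroupOf N)
  intro n hn
  conv_rhs => rw [← cosetSum_apply_translate hv hn]
  simp only [cosetSum_apply, map_sum]
  simp only [← Module.End.mul_apply, ← map_mul, mul_comm n]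

lemma cosetSum_of_mem_grpInv [H.IsFiniteRelIndex N] {v : V} (hv : v ∈ grpInv σ N) :
    cosetSum σ N H v = (H.relIndex N : ℂ) • v := by
  have := Fintype.ofFinite (N ⧸ H.subgroupOf N)
  rw [cosetSum_apply, Finset.sum_congr rfl fun q _ ↦ hv _ q.out.2]
  simp [Nat.cast_smul_eq_nsmul, Subgroup.relIndex, Subgroup.index, Nat.card_eq_fintype_card]

lemma cosetSum_sub_mem_grpCoinvKer [H.IsFiniteRelIndex N] (v : V) :
    cosetSum σ N H v - (H.relIndex N : ℂ) • v ∈ grpCoinvKer σ N := by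
  have := Fintype.ofFinite (N ⧸ H.subgroupOf N)
  have : cosetSum σ N H v - (H.relIndex N : ℂ) • v
      = ∑ q : N ⧸ H.subgroupOf N, (σ (q.out : N) v - v) := by
    simp [cosetSum_apply, Nat.cast_smul_eq_nsmul, Subgroup.relIndex, Subgroup.index,
      Nat.card_eq_fintype_card]
  rw [this]
  exact Submodule.sum_mem _ fun q _ ↦ Submodule.subset_span ⟨_, q.out.2, v, rfl⟩

lemma exists_cosetSum_eq_zero (hσ : ∀ v, ∃ H : Subgroup G, H.IsFiniteRelIndex N ∧ v ∈ grpInv σ H)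
    {w : V} (hw : w ∈ grpCoinvKer σ N) :
    ∃ H : Subgroup G, H.IsFiniteRelIndex N ∧
      ∀ H' ≤ H, H'.IsFiniteRelIndex N → cosetSum σ N H' w = 0 := by
  induction hw using Submodule.span_induction with
  | mem w hw =>
    obtain ⟨n, hn, v, rfl⟩ := hw
    obtain ⟨H, hH, hv⟩ := hσ v
    refine ⟨H, hH, fun H' hle _ ↦ ?_⟩
    rw [map_sub, cosetSum_apply_translate (fun h hh ↦ hv h (hle hh)) hn, sub_self]
  | zero => exact ⟨⊤, Subgroup.isFiniteRelIndex_of_finiteIndex, fun _ _ _ ↦ map_zero _⟩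
  | add x y _ _ hx hy =>
    obtain ⟨H₁, h₁, hx⟩ := hx
    obtain ⟨H₂, h₂, hy⟩ := hy
    refine ⟨H₁ ⊓ H₂, ⟨Subgroup.relIndex_inf_ne_zero h₁.1 h₂.1⟩, fun H' hle hfin ↦ ?_⟩
    rw [map_add, hx H' (hle.trans inf_le_left) hfin, hy H' (hle.trans inf_le_right) hfin, add_zero]
  | smul a x _ hx =>
    obtain ⟨H, hH, hx⟩ := hx
    exact ⟨H, hH, fun H' hle hfin ↦ by rw [map_smul, hx H' hle hfin, smul_zero]⟩

lemma relIndex_cast_ne_zero (H N : Subgroup G) [H.IsFiniteRelIndex N] : (H.relIndex N : ℂ) ≠ 0 :=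
  Nat.cast_ne_zero.2 Subgroup.IsFiniteRelIndex.relIndex_ne_zero

lemma disjoint_grpInv_grpCoinvKer
    (hσ : ∀ v, ∃ H : Subgroup G, H.IsFiniteRelIndex N ∧ v ∈ grpInv σ H) :
    Disjoint (grpInv σ N) (grpCoinvKer σ N) := by
  refine Submodule.disjoint_def.2 fun w hinv hco ↦ ?_
  obtain ⟨H, hH, hzero⟩ := exists_cosetSum_eq_zero hσ hco
  have := hzero H le_rfl hH
  rw [cosetSum_of_mem_grpInv hinv] at this
  exact (smul_eq_zero.1 this).resolve_left (relIndex_cast_ne_zero H N)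

lemma codisjoint_grpInv_grpCoinvKer
    (hσ : ∀ v, ∃ H : Subgroup G, H.IsFiniteRelIndex N ∧ v ∈ grpInv σ H) :
    Codisjoint (grpInv σ N) (grpCoinvKer σ N) := by
  refine codisjoint_iff.2 (Submodule.eq_top_iff'.2 fun v ↦ ?_)
  obtain ⟨H, hH, hv⟩ := hσ v
  have hadd := Submodule.sub_mem _ (Submodule.mem_sup_left (cosetSum_mem_grpInv (N := N) hv))
    (Submodule.mem_sup_right (cosetSum_sub_mem_grpCoinvKer (σ := σ) (N := N) (H := H) v))
  rwa [sub_sub_cancel, Submodule.smul_mem_iff _ (relIndex_cast_ne_zero H N)] at hadd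

lemma cosetSum_eq_zero (hσ : ∀ v, ∃ H : Subgroup G, H.IsFiniteRelIndex N ∧ v ∈ grpInv σ H)
    [H.IsFiniteRelIndex N] {v : V} (hv : v ∈ grpInv σ H) (hco : v ∈ grpCoinvKer σ N) :
    cosetSum σ N H v = 0 := by
  have hadd := Submodule.add_mem _ (cosetSum_sub_mem_grpCoinvKer (σ := σ) (N := N) (H := H) v)
    (Submodule.smul_mem _ (H.relIndex N : ℂ) hco)
  rw [sub_add_cancel] at hadd
  exact Submodule.disjoint_def.1 (disjoint_grpInv_grpCoinvKer hσ) _ (cosetSum_mem_grpInv hv) hadd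

end Averaging

section ClosedBall

open Filter Topology NNReal

variable {K : Type*} [NontriviallyNormedField K]

lemma exists_closedBall_of_eventually {P : K → Prop} (hP : ∀ᶠ b in 𝓝 0, P b) :
    ∃ δ : ℝ≥0, δ ≠ 0 ∧ ∀ b, ‖b‖ ≤ δ → P b := by
  obtain ⟨δ, hδ, hP⟩ := Metric.nhds_basis_closedBall.eventually_iff.1 hP
  lift δ to ℝ≥0 using hδ.le
  exact ⟨δ, (NNReal.coe_pos.1 hδ).ne', fun b hb ↦ hP (mem_closedBall_zero_iff.2 hb)⟩

variable [IsUltrametricDist K] {V : Type*} [AddCommGroup V] [Module ℂ V]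

variable (K) in
/-- The closed ball of radius `r` around `0`, as a subgroup of the additive group of `K`. -/
def closedBallSubgroup (r : ℝ≥0) : Subgroup (Multiplicative K) where
  carrier := {b | ‖b.toAdd‖ ≤ r}
  one_mem' := by simp
  mul_mem' {a b} ha hb := (IsUltrametricDist.norm_add_le_max a.toAdd b.toAdd).trans (max_le ha hb)
  inv_mem' {a} ha := by simpa using ha

lemma mem_closedBallSubgroup {r : ℝ≥0} {b : Multiplicative K} :
    b ∈ closedBallSubgroup K r ↔ ‖b.toAdd‖ ≤ r := Iff.rfl

lemma closedBallSubgroup_mono : Monotone (closedBallSubgroup K) :=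
  fun _ _ h _ hb ↦ le_trans hb (NNReal.coe_le_coe.2 h)

instance closedBallSubgroup_isFiniteRelIndex [ProperSpace K] (r : ℝ≥0) {δ : ℝ≥0} [NeZero δ] :
    (closedBallSubgroup K δ).IsFiniteRelIndex (closedBallSubgroup K r) := by
  have coe_eq (r : ℝ≥0) :
      (closedBallSubgroup K r : Set (Multiplicative K)) = Metric.closedBall (0 : K) r :=
    Set.ext fun b ↦ mem_closedBall_zero_iff.symm
  have hcompact : IsCompact (closedBallSubgroup K r : Set (Multiplicative K)) :=
    coe_eq r ▸ isCompact_closedBall (0 : K) _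
  have := isCompact_iff_compactSpace.1 hcompact
  have hopen : IsOpen (closedBallSubgroup K δ : Set (Multiplicative K)) :=
    coe_eq δ ▸ IsUltrametricDist.isOpen_closedBall (0 : K) (NNReal.coe_ne_zero.2 (NeZero.ne δ))
  have := Subgroup.quotient_finite_of_isOpen
    ((closedBallSubgroup K δ).subgroupOf (closedBallSubgroup K r))
    (hopen.preimage continuous_subtype_val)
  exact ⟨Subgroup.index_ne_zero_of_finite⟩

lemma Smooth.exists_mem_grpInv_closedBall {σ : Representation ℂ (Multiplicative K) V}
    (hσ : Smooth σ) (v : V) : ∃ δ : ℝ≥0, δ ≠ 0 ∧ v ∈ grpInv σ (closedBallSubgroup K δ) :=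
  exists_closedBall_of_eventually (K := K) (hσ v)

lemma Smooth.exists_isFiniteRelIndex [ProperSpace K] {σ : Representation ℂ (Multiplicative K) V}
    (hσ : Smooth σ) (r : ℝ≥0) (v : V) :
    ∃ H : Subgroup (Multiplicative K),
      H.IsFiniteRelIndex (closedBallSubgroup K r) ∧ v ∈ grpInv σ H := by
  obtain ⟨δ, hδ, hv⟩ := hσ.exists_mem_grpInv_closedBall v
  have : NeZero δ := ⟨hδ⟩
  exact ⟨_, closedBallSubgroup_isFiniteRelIndex r, hv⟩

lemma grpCoinvKer_mono {G : Type*} [Group G] (σ : Representation ℂ G V) {N N' : Subgroup G}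
    (h : N ≤ N') : grpCoinvKer σ N ≤ grpCoinvKer σ N' := by
  refine Submodule.span_mono ?_
  rintro w ⟨n, hn, v, rfl⟩
  exact ⟨n, h hn, v, rfl⟩

lemma exists_mem_grpCoinvKer_closedBall {σ : Representation ℂ (Multiplicative K) V} {w : V}
    (hw : w ∈ grpCoinvKer σ ⊤) : ∃ r : ℝ≥0, w ∈ grpCoinvKer σ (closedBallSubgroup K r) := by
  induction hw using Submodule.span_induction with
  | mem w hw =>
    obtain ⟨b, -, v, rfl⟩ := hw
    exact ⟨‖b.toAdd‖₊, Submodule.subset_span ⟨b, mem_closedBallSubgroup.2 le_rfl, v, rfl⟩⟩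
  | zero => exact ⟨0, Submodule.zero_mem _⟩
  | add x y _ _ hx hy =>
    obtain ⟨r, hx⟩ := hx
    obtain ⟨s, hy⟩ := hy
    exact ⟨max r s, Submodule.add_mem _
      (grpCoinvKer_mono σ (closedBallSubgroup_mono (le_max_left r s)) hx)
      (grpCoinvKer_mono σ (closedBallSubgroup_mono (le_max_right r s)) hy)⟩
  | smul a x _ hx =>
    obtain ⟨r, hx⟩ := hx
    exact ⟨r, Submodule.smul_mem _ _ hx⟩

end ClosedBall

section Characters

open Filter Topology NNReal

variable {K : Type*} [NontriviallyNormedField K] {ψ : AddChar K ℂ}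

lemma addChar_eventually_eq_one (hψ : IsLocallyConstant ψ) : ∀ᶠ b in 𝓝 0, ψ b = 1 := by
  simpa using hψ.eventually_eq 0

lemma addChar_mulShift_isLocallyConstant (hψ : IsLocallyConstant ψ) (a : K) :
    IsLocallyConstant (ψ.mulShift a) :=
  hψ.comp_continuous (continuous_const_mul a)

lemma exists_addChar_conductor [ProperSpace K] (hψ : IsLocallyConstant ψ) (hψne : ψ ≠ 1) :
    ∃ c, ψ c ≠ 1 ∧ ∀ y, ‖y‖ < ‖c‖ → ψ y = 1 := by
  have hclosed : IsClosed {y | ψ y ≠ 1} := (hψ.isOpen_fiber 1).isClosed_compl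
  obtain ⟨c, hc, hdist⟩ := hclosed.exists_infDist_eq_dist (AddChar.ne_one_iff.1 hψne) 0
  refine ⟨c, hc, fun y hy ↦ by_contra fun hne ↦ hy.not_ge ?_⟩
  simpa [hdist] using Metric.infDist_le_dist_of_mem (s := {y | ψ y ≠ 1}) (x := 0) hne

variable [IsUltrametricDist K]

lemma linearIndependent_addChar_mul {c : K} (hc : ψ c ≠ 1) {r : ℝ} (hr : 0 < r) {ι : Type*}
    {b : ι → K} (hb : Pairwise fun i j ↦ ‖c‖ < r * ‖b i - b j‖) :
    LinearIndependent ℂ fun i (a : Metric.ball (0 : K) r) ↦ ψ (a * b i) := by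
  let A := IsUltrametricDist.ball_openAddSubgroup K hr
  let χ (i : ι) : Multiplicative A →* ℂ :=
    { toFun := fun a ↦ ψ ((a.toAdd : K) * b i)
      map_one' := by simp
      map_mul' := fun a a' ↦ by simp [add_mul, AddChar.map_add_eq_mul] }
  have hχ : Function.Injective χ := by
    intro i j hij
    by_contra hne
    have hlt : ‖c‖ < r * ‖b i - b j‖ := hb hne
    have hβ : b i - b j ≠ 0 := fun h0 ↦ by
      rw [h0, norm_zero, mul_zero] at hlt
      exact hlt.not_ge (norm_nonneg c)
    have ha : c / (b i - b j) ∈ A := by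
      refine mem_ball_zero_iff.2 ?_
      rwa [norm_div, div_lt_iff₀ (norm_pos_iff.2 hβ)]
    have hij := DFunLike.congr_fun hij (Multiplicative.ofAdd ⟨_, ha⟩)
    change ψ (c / (b i - b j) * b i) = ψ (c / (b i - b j) * b j) at hij
    apply hc
    rw [← div_mul_cancel₀ c hβ, mul_sub, sub_eq_add_neg, AddChar.map_add_eq_mul, hij,
      AddChar.map_neg_eq_inv, mul_inv_cancel₀ (ψ.val_isUnit _).ne_zero]
  exact (linearIndependent_monoidHom (Multiplicative A) ℂ).comp χ hχ

lemma eq_zero_of_linearIndependent_of_sum_smul {𝕜 ι α V : Type*} [Field 𝕜] [Fintype ι]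
    [AddCommGroup V] [Module 𝕜 V] {f : ι → α → 𝕜} (hf : LinearIndependent 𝕜 f) {v : ι → V}
    (hv : ∀ a, ∑ i, f i a • v i = 0) (i : ι) : v i = 0 := by
  refine (Module.forall_dual_apply_eq_zero_iff 𝕜 _).1 fun l ↦ ?_
  refine Fintype.linearIndependent_iff.1 hf (fun i ↦ l (v i)) (funext fun a ↦ ?_) i
  simpa [mul_comm] using congrArg l (hv a)

end Characters

section TwistedCoinvariants

open Filter Topology NNReal Aff

section Field

variable {K : Type*} [Field K] {V : Type*} [AddCommGroup V] [Module ℂ V]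

/-- The action of the additive group of `K` through `b ↦ s_b`, twisted by the inverse of the
character `ψ'`: its coinvariants are the `ψ'`-twisted coinvariants of `ρ`. -/
def twist (ρ : Rep K V) (ψ' : AddChar K ℂ) : Representation ℂ (Multiplicative K) V where
  toFun b := ψ' (-b.toAdd) • ρ (sSHom b)
  map_one' := by simp
  map_mul' b c := by
    rw [toAdd_mul, neg_add, AddChar.map_add_eq_mul, map_mul, map_mul, smul_mul_smul_comm]

variable {ρ : Rep K V} {ψ ψ' : AddChar K ℂ}

lemma twist_ofAdd_apply (b : K) (v : V) :
    twist ρ ψ' (Multiplicative.ofAdd b) v = ψ' (-b) • ρ (sS b) v := rfl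

lemma addChar_neg_mul_cancel (b : K) : ψ' (-b) * ψ' b = 1 := by
  rw [← AddChar.map_add_eq_mul, neg_add_cancel, AddChar.map_zero_eq_one]

lemma twist_apply_eq_iff {b : Multiplicative K} {v : V} :
    twist ρ ψ' b v = v ↔ ρ (sSHom b) v = ψ' b.toAdd • v := by
  change ψ' (-b.toAdd) • ρ (sSHom b) v = v ↔ _
  rw [AddChar.map_neg_eq_inv, inv_smul_eq_iff₀ (ψ'.val_isUnit _).ne_zero]

lemma sTwistKer_eq_grpCoinvKer : sTwistKer ρ ψ' = grpCoinvKer (twist ρ ψ') ⊤ := by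
  apply le_antisymm <;> refine Submodule.span_le.2 ?_
  · rintro w ⟨b, v, rfl⟩
    refine Submodule.subset_span ⟨Multiplicative.ofAdd b, Subgroup.mem_top _, ψ' b • v, ?_⟩
    rw [twist_ofAdd_apply, map_smul, smul_smul, addChar_neg_mul_cancel, one_smul]
  · rintro w ⟨b, -, v, rfl⟩
    refine Submodule.subset_span ⟨b.toAdd, ψ' (-b.toAdd) • v, ?_⟩
    rw [map_smul, smul_smul, mul_comm, addChar_neg_mul_cancel, one_smul]
    rfl

lemma sTwistKer_one : sTwistKer ρ 1 = sCoinvKer ρ := by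
  simp [sTwistKer, sCoinvKer]

lemma map_sS_mem_sTwistKer (c : K) {w : V} (hw : w ∈ sTwistKer ρ ψ') :
    ρ (sS c) w ∈ sTwistKer ρ ψ' := by
  refine (Submodule.span_le.2 ?_ : sTwistKer ρ ψ' ≤ (sTwistKer ρ ψ').comap (ρ (sS c))) hw
  rintro _ ⟨b, v, rfl⟩
  refine Submodule.subset_span ⟨b, ρ (sS c) v, ?_⟩
  rw [map_sub, map_smul, ← Module.End.mul_apply, ← map_mul, ← Module.End.mul_apply, ← map_mul,
    mul_sS, sS_t, Units.val_one, one_mul]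

lemma map_xT_mem_sTwistKer {a : K} (y : Kˣ) {w : V} (hw : w ∈ sTwistKer ρ (ψ.mulShift a)) :
    ρ (xT y) w ∈ sTwistKer ρ (ψ.mulShift (a * (y⁻¹ : Kˣ))) := by
  refine (Submodule.span_le.2 ?_ : sTwistKer ρ (ψ.mulShift a) ≤
    (sTwistKer ρ (ψ.mulShift (a * (y⁻¹ : Kˣ)))).comap (ρ (xT y))) hw
  rintro _ ⟨b, v, rfl⟩
  refine Submodule.subset_span ⟨y * b, ρ (xT y) v, ?_⟩
  rw [map_sub, map_smul, ← Module.End.mul_apply, ← map_mul, mul_sS, map_mul, Module.End.mul_apply,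
    xT_t, AddChar.mulShift_apply, AddChar.mulShift_apply, mul_assoc, Units.inv_mul_cancel_left]

/-- A `ψ`-Whittaker functional, i.e. a linear functional on the twisted coinvariants `V_{S,ψ}`. -/
def IsWhittaker (ρ : Rep K V) (ψ : AddChar K ℂ) (Λ : V →ₗ[ℂ] ℂ) : Prop :=
  ∀ b v, Λ (ρ (sS b) v) = ψ b * Λ v

variable {Λ : V →ₗ[ℂ] ℂ}

lemma IsWhittaker.apply_xT_sS (hΛ : IsWhittaker ρ ψ Λ) (x : Kˣ) (b : K) (v : V) :
    Λ (ρ (xT x) (ρ (sS b) v)) = ψ (b * x) * Λ (ρ (xT x) v) := by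
  rw [← Module.End.mul_apply, ← map_mul, mul_sS, map_mul, Module.End.mul_apply, hΛ, xT_t,
    mul_comm (x : K)]

end Field

variable {K : Type*} [NontriviallyNormedField K]
variable {V : Type*} [AddCommGroup V] [Module ℂ V] {ρ : Rep K V} {ψ ψ' : AddChar K ℂ}

lemma smooth_twist (hρ : Smooth ρ) (hψ' : IsLocallyConstant ψ') : Smooth (twist ρ ψ') := by
  intro v
  have hψ'1 : ∀ᶠ b : Multiplicative K in 𝓝 1, ψ' b.toAdd = 1 :=
    addChar_eventually_eq_one (K := K) hψ'
  filter_upwards [hρ.comp sSHom continuous_sSHom v, hψ'1] with b hb hψ'b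
  rw [twist_apply_eq_iff, hψ'b, one_smul]
  exact hb

lemma grpCoinvKer_twist_congr {N : Subgroup (Multiplicative K)}
    (h : ∀ b ∈ N, ψ b.toAdd = ψ' b.toAdd) :
    grpCoinvKer (twist ρ ψ) N = grpCoinvKer (twist ρ ψ') N := by
  have key : ∀ b ∈ N, twist ρ ψ b = twist ρ ψ' b := fun b hb ↦ by
    have := h b⁻¹ (inv_mem hb)
    rw [toAdd_inv] at this
    simp only [twist, MonoidHom.coe_mk, OneHom.coe_mk, this]
  apply le_antisymm <;> refine Submodule.span_mono ?_ <;> rintro w ⟨b, hb, v, rfl⟩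
  · exact ⟨b, hb, v, by rw [key b hb]⟩
  · exact ⟨b, hb, v, by rw [key b hb]⟩

variable [IsUltrametricDist K]

lemma exists_forall_mem_grpCoinvKer_of_isCompact (hψ : IsLocallyConstant ψ) {s : Set K}
    (hs : IsCompact s) {w : V} (hw : ∀ a, w ∈ sTwistKer ρ (ψ.mulShift a)) :
    ∃ r, ∀ a ∈ s, w ∈ grpCoinvKer (twist ρ (ψ.mulShift a)) (closedBallSubgroup K r) := by
  refine hs.induction_on (p := fun s ↦
    ∃ r, ∀ a ∈ s, w ∈ grpCoinvKer (twist ρ (ψ.mulShift a)) (closedBallSubgroup K r)) ?_ ?_ ?_ ?_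
  · exact ⟨0, by simp⟩
  · rintro s t hst ⟨r, hr⟩
    exact ⟨r, fun a ha ↦ hr a (hst ha)⟩
  · rintro s t ⟨r₁, h₁⟩ ⟨r₂, h₂⟩
    refine ⟨max r₁ r₂, fun a ha ↦ ?_⟩
    rcases ha with ha | ha
    · exact grpCoinvKer_mono _ (closedBallSubgroup_mono (le_max_left r₁ r₂)) (h₁ a ha)
    · exact grpCoinvKer_mono _ (closedBallSubgroup_mono (le_max_right r₁ r₂)) (h₂ a ha)
  · intro a _
    have hwa := hw a
    rw [sTwistKer_eq_grpCoinvKer] at hwa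
    obtain ⟨r, hr⟩ := exists_mem_grpCoinvKer_closedBall hwa
    obtain ⟨δ, hδ, hψδ⟩ := exists_closedBall_of_eventually (addChar_eventually_eq_one hψ)
    have hnear : ∀ᶠ a' in 𝓝 a, ‖a' - a‖ * r < δ := by
      have : Continuous fun a' ↦ ‖a' - a‖ * r := by fun_prop
      exact this.tendsto a |>.eventually_lt_const (by simpa using pos_iff_ne_zero.2 hδ)
    refine ⟨_, mem_nhdsWithin_of_mem_nhds hnear, r, fun a' ha' ↦ ?_⟩
    convert hr using 1
    refine grpCoinvKer_twist_congr fun b hb ↦ ?_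
    have hle : ‖(a' - a) * b.toAdd‖ ≤ δ := by
      rw [norm_mul]
      exact (mul_le_mul_of_nonneg_left hb (norm_nonneg _)).trans (le_of_lt ha')
    rw [AddChar.mulShift_apply, ← sub_add_cancel a' a, add_mul, AddChar.map_add_eq_mul,
      hψδ _ hle, one_mul, AddChar.mulShift_apply]

variable [ProperSpace K]

/-- Fourier uniqueness: averaging `w` over a large ball modulo a stabilizer gives, for each `a`, a
vanishing combination of translates of `w` with coefficients the characters `ψ (-(a * b))`, and
distinct characters are linearly independent. -/
theorem eq_zero_of_forall_mem_sTwistKer (hψ : IsLocallyConstant ψ) (hψne : ψ ≠ 1)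
    (hρ : Smooth ρ) {w : V} (hw : ∀ a, w ∈ sTwistKer ρ (ψ.mulShift a)) : w = 0 := by
  obtain ⟨c, hc, hψc⟩ := exists_addChar_conductor hψ hψne
  obtain ⟨δ, hδ, hfix⟩ :=
    exists_closedBall_of_eventually (eventually_sS_of_mem_smoothVectors (hρ w))
  have hδpos : (0 : ℝ) < δ := NNReal.coe_pos.2 (pos_iff_ne_zero.2 hδ)
  have : NeZero δ := ⟨hδ⟩
  have hc0 : 0 < ‖c‖ := norm_pos_iff.2 fun h ↦ hc (by rw [h, AddChar.map_zero_eq_one])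
  obtain ⟨r, hr⟩ := exists_forall_mem_grpCoinvKer_of_isCompact hψ
    (isCompact_closedBall (0 : K) (‖c‖ / δ)) hw
  let Q := closedBallSubgroup K r ⧸ (closedBallSubgroup K δ).subgroupOf (closedBallSubgroup K r)
  have : Fintype Q := Fintype.ofFinite Q
  let b (q : Q) : K := (q.out : Multiplicative K).toAdd
  have hsum (a : Metric.ball (0 : K) (‖c‖ / δ)) : ∑ q, ψ (a * -b q) • ρ (sS (b q)) w = 0 := by
    have hwfix : w ∈ grpInv (twist ρ (ψ.mulShift a)) (closedBallSubgroup K δ) := fun n hn ↦ by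
      have hlt : ‖(a : K) * n.toAdd‖ < ‖c‖ := by
        rw [norm_mul]
        refine (mul_le_mul_of_nonneg_left hn (norm_nonneg _)).trans_lt ?_
        exact (lt_div_iff₀ hδpos).1 (mem_ball_zero_iff.1 a.2)
      rw [twist_apply_eq_iff, AddChar.mulShift_apply, hψc _ hlt, one_smul]
      exact hfix _ hn
    have hzero := cosetSum_eq_zero
      ((smooth_twist hρ (addChar_mulShift_isLocallyConstant hψ _)).exists_isFiniteRelIndex r)
      hwfix (hr a (Metric.ball_subset_closedBall a.2))
    rwa [cosetSum_apply] at hzero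
  have hseparated : Pairwise fun q q' : Q ↦ ‖c‖ < ‖c‖ / δ * ‖-b q - -b q'‖ := by
    intro q q' hne
    rw [div_mul_eq_mul_div, lt_div_iff₀ hδpos]
    refine mul_lt_mul_of_pos_left (lt_of_not_ge fun hle ↦ hne ?_) hc0
    rw [← QuotientGroup.out_eq' q, ← QuotientGroup.out_eq' q', QuotientGroup.eq,
      Subgroup.mem_subgroupOf, mem_closedBallSubgroup]
    rwa [sub_neg_eq_add] at hle
  have hzero := eq_zero_of_linearIndependent_of_sum_smul
    (linearIndependent_addChar_mul hc (div_pos hc0 hδpos) hseparated) hsum (QuotientGroup.mk 1)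
  simpa using congrArg (ρ (sS (b (QuotientGroup.mk 1)))⁻¹) hzero

lemma disjoint_sInv_sCoinvKer (hρ : Smooth ρ) : Disjoint (sInv ρ) (sCoinvKer ρ) := by
  refine Submodule.disjoint_def.2 fun v hinv hco ↦ ?_
  rw [← sTwistKer_one, sTwistKer_eq_grpCoinvKer] at hco
  obtain ⟨r, hr⟩ := exists_mem_grpCoinvKer_closedBall hco
  have hsmooth : Smooth (twist ρ 1) := smooth_twist hρ (IsLocallyConstant.const 1)
  refine Submodule.disjoint_def.1
    (disjoint_grpInv_grpCoinvKer (hsmooth.exists_isFiniteRelIndex r)) v (fun b _ ↦ ?_) hr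
  rw [twist_apply_eq_iff, AddChar.one_apply, one_smul]
  exact hinv b.toAdd

theorem exists_isWhittaker_apply_ne_zero (hψ : IsLocallyConstant ψ) (hψne : ψ ≠ 1)
    (hρ : Smooth ρ) {v : V} (hv : v ∉ sInv ρ) :
    ∃ Λ, IsWhittaker ρ ψ Λ ∧ ∃ x : Kˣ, Λ (ρ (xT x) v) ≠ 0 := by
  by_contra! hvanish
  have hmem_one (x : Kˣ) : ρ (xT x) v ∈ sTwistKer ρ ψ := by
    by_contra hx
    obtain ⟨Λ, hΛx, hΛ⟩ := Submodule.exists_le_ker_of_notMem hx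
    refine hΛx (hvanish Λ (fun b u ↦ ?_) x)
    have := hΛ (Submodule.subset_span ⟨b, u, rfl⟩)
    rwa [LinearMap.mem_ker, map_sub, map_smul, sub_eq_zero] at this
  have hmem (x : Kˣ) : v ∈ sTwistKer ρ (ψ.mulShift x) := by
    have := map_xT_mem_sTwistKer (a := 1) x⁻¹ (by simpa using hmem_one x)
    rwa [← Module.End.mul_apply, ← map_mul, ← xTHom_apply, ← xTHom_apply, ← map_mul,
      inv_mul_cancel, map_one, map_one, inv_inv, one_mul] at this
  refine hv fun b ↦ sub_eq_zero.1 (eq_zero_of_forall_mem_sTwistKer hψ hψne hρ fun a ↦ ?_)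
  rcases eq_or_ne a 0 with rfl | ha
  · exact Submodule.subset_span ⟨b, v, by simp⟩
  · exact Submodule.sub_mem _ (map_sS_mem_sTwistKer b (hmem (Units.mk0 a ha)))
      (hmem (Units.mk0 a ha))

end TwistedCoinvariants

section MatrixCoeff

variable {k G X : Type*} [CommSemiring k] [Monoid G] [AddCommMonoid X] [Module k X]

/-- The matrix coefficients `x ↦ L (τ x y)` of a functional `L` on a representation. -/
def matrixCoeff (τ : Representation k G X) (L : X →ₗ[k] k) : X →ₗ[k] (G → k) :=
  LinearMap.pi fun x ↦ L ∘ₗ τ x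

@[simp] lemma matrixCoeff_apply (τ : Representation k G X) (L : X →ₗ[k] k) (y : X) (x : G) :
    matrixCoeff τ L y x = L (τ x y) := rfl

lemma mem_ker_matrixCoeff {τ : Representation k G X} {L : X →ₗ[k] k} {y : X} :
    y ∈ LinearMap.ker (matrixCoeff τ L) ↔ ∀ x, L (τ x y) = 0 :=
  LinearMap.mem_ker.trans funext_iff

end MatrixCoeff

section Kirillov

open Filter Topology NNReal Aff

section Field

variable {K : Type*} [Field K] {V : Type*} [AddCommGroup V] [Module ℂ V]

/-- The Kirillov map of a functional `Λ`: the matrix coefficients of `Λ` restricted to the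
torus `k^×`. -/
def kirillov (ρ : Rep K V) (Λ : V →ₗ[ℂ] ℂ) : V →ₗ[ℂ] (Kˣ → ℂ) :=
  matrixCoeff (ρ.comp xTHom) Λ

variable {ρ : Rep K V} {Λ : V →ₗ[ℂ] ℂ}

@[simp] lemma kirillov_apply (v : V) (x : Kˣ) : kirillov ρ Λ v x = Λ (ρ (xT x) v) := rfl

lemma kirillov_apply_one (v : V) : kirillov ρ Λ v 1 = Λ v := by
  rw [kirillov_apply, ← xTHom_apply, map_one, map_one, Module.End.one_apply]

end Field

variable {K : Type*} [NontriviallyNormedField K]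

section Filter

variable (K) in
/-- The filter of punctured neighbourhoods of `0` on `k^×`. -/
def unitsNhdsZero : Filter Kˣ := comap (↑) (𝓝 (0 : K))

lemma unitsNhdsZero_hasBasis :
    (unitsNhdsZero K).HasBasis (0 < ·) fun ε ↦ {x : Kˣ | ‖(x : K)‖ < ε} := by
  simpa [unitsNhdsZero, Set.preimage] using
    (Metric.nhds_basis_ball (x := (0 : K))).comap ((↑) : Kˣ → K)

instance : (unitsNhdsZero K).NeBot := by
  refine unitsNhdsZero_hasBasis.neBot_iff.2 fun {ε} hε ↦ ?_
  obtain ⟨x, hx0, hx⟩ := NormedField.exists_norm_lt K hε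
  exact ⟨Units.mk0 x (norm_pos_iff.1 hx0), hx⟩

lemma tendsto_mul_right_unitsNhdsZero (u : Kˣ) :
    Tendsto (· * u) (unitsNhdsZero K) (unitsNhdsZero K) := by
  have hmul : Tendsto (fun y : K ↦ y * u) (𝓝 0) (𝓝 0) := by
    simpa using (continuous_mul_const (u : K)).tendsto 0
  exact tendsto_comap_iff.2 (hmul.comp tendsto_comap)

variable (K) in
/-- The open ball of radius `ε` around `1` in `k^×`. -/
def unitBall (ε : ℝ) : Set Kˣ := (↑) ⁻¹' Metric.ball (1 : K) ε

lemma mem_unitBall {ε : ℝ} {x : Kˣ} : x ∈ unitBall K ε ↔ ‖(x : K) - 1‖ < ε := by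
  rw [unitBall, Set.mem_preimage, mem_ball_iff_norm]

lemma nhds_one_hasBasis_unitBall : (𝓝 (1 : Kˣ)).HasBasis (0 < ·) (unitBall K) := by
  rw [Units.isEmbedding_val₀.isInducing.nhds_eq_comap]
  exact Metric.nhds_basis_ball.comap _

variable [IsUltrametricDist K]

variable (K) in
/-- The ball `unitBall K ε` as a subgroup of `k^×`, for `ε ≤ 1`. -/
def unitBallSubgroup {ε : ℝ} (hε : 0 < ε) (hε1 : ε ≤ 1) : Subgroup Kˣ :=
  have norm_eq_one {u : Kˣ} (hu : u ∈ unitBall K ε) : ‖(u : K)‖ = 1 := by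
    have hlt : ‖(u : K) - 1‖ < ‖(1 : K)‖ :=
      ((mem_unitBall.1 hu).trans_le hε1).trans_eq norm_one.symm
    rw [← sub_add_cancel (u : K) 1, IsUltrametricDist.norm_add_eq_max_of_norm_ne_norm hlt.ne,
      max_eq_right hlt.le, norm_one]
  { carrier := unitBall K ε
    one_mem' := by simp [unitBall, hε]
    mul_mem' := fun {u v} hu hv ↦ by
      have h : ((u * v : Kˣ) : K) - 1 = u * (v - 1) + (u - 1) := by push_cast; ring
      rw [mem_unitBall, h]
      refine (IsUltrametricDist.norm_add_le_max _ _).trans_lt (max_lt ?_ (mem_unitBall.1 hu))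
      rw [norm_mul, norm_eq_one hu, one_mul]
      exact mem_unitBall.1 hv
    inv_mem' := fun {u} hu ↦ by
      have h : ((u⁻¹ : Kˣ) : K) - 1 = (u⁻¹ : Kˣ) * (1 - u) := by
        rw [mul_sub, Units.inv_mul, mul_one]
      rw [mem_unitBall, h, norm_mul, norm_sub_rev, Units.val_inv_eq_inv_val, norm_inv,
        norm_eq_one hu, inv_one, one_mul]
      exact mem_unitBall.1 hu }

end Filter

variable {ψ : AddChar K ℂ}

lemma addChar_mul_eventually_eq_one (hψ : IsLocallyConstant ψ) (b : K) :
    ∀ᶠ x : Kˣ in unitsNhdsZero K, ψ (b * x) = 1 :=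
  tendsto_comap.eventually
    (addChar_eventually_eq_one (addChar_mulShift_isLocallyConstant hψ b))

lemma isLocallyConstant_of_mem_smoothVectors {φ : Kˣ → ℂ}
    (hφ : φ ∈ smoothVectors (repCx K ψ)) : IsLocallyConstant φ := by
  rw [IsLocallyConstant.iff_eventually_eq]
  intro x
  have hx : Tendsto (x⁻¹ * ·) (𝓝 x) (𝓝 1) := (continuous_const_mul x⁻¹).tendsto' x 1 (by simp)
  filter_upwards [hx.eventually (eventually_xT_of_mem_smoothVectors hφ)] with y hy
  simpa using congrFun hy x

lemma exists_eq_zero_of_lt_norm (hψne : ψ ≠ 1) {φ : Kˣ → ℂ}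
    (hφ : φ ∈ smoothVectors (repCx K ψ)) : ∃ R, ∀ x : Kˣ, R < ‖(x : K)‖ → φ x = 0 := by
  obtain ⟨y, hy⟩ := AddChar.ne_one_iff.1 hψne
  obtain ⟨δ, hδ, hfix⟩ :=
    exists_closedBall_of_eventually (eventually_sS_of_mem_smoothVectors hφ)
  refine ⟨‖y‖ / δ, fun x hx ↦ by_contra fun hne ↦ hy ?_⟩
  have hb : ‖y * (x⁻¹ : Kˣ)‖ ≤ δ := by
    rw [norm_mul, Units.val_inv_eq_inv_val, norm_inv, ← div_eq_mul_inv]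
    exact (div_le_comm₀ (norm_pos_iff.2 x.ne_zero) (by positivity)).2 hx.le
  have := congrFun (hfix _ hb) x
  rw [repCx_apply, sS_s, sS_t, mul_one, Units.inv_mul_cancel_right] at this
  exact (mul_eq_right₀ hne).1 this

lemma isCompact_annulus [ProperSpace K] {r : ℝ} (hr : 0 < r) (R : ℝ) :
    IsCompact {x : Kˣ | r ≤ ‖(x : K)‖ ∧ ‖(x : K)‖ ≤ R} := by
  have himage : ((↑) : Kˣ → K) '' {x : Kˣ | r ≤ ‖(x : K)‖ ∧ ‖(x : K)‖ ≤ R} =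
      {x : K | r ≤ ‖x‖} ∩ Metric.closedBall 0 R := by
    ext y
    constructor
    · rintro ⟨x, hx, rfl⟩
      simpa using hx
    · rintro ⟨hr', hR⟩
      exact ⟨Units.mk0 y (norm_pos_iff.1 (hr.trans_le hr')), ⟨hr', by simpa using hR⟩, rfl⟩
  rw [Units.isEmbedding_val₀.isCompact_iff, himage]
  exact (isCompact_closedBall _ _).inter_left (isClosed_le continuous_const continuous_norm)

lemma mem_SSx_of_mem_smoothVectors [ProperSpace K] (hψne : ψ ≠ 1) {φ : Kˣ → ℂ}
    (hφ : φ ∈ smoothVectors (repCx K ψ)) (hφ0 : ∀ᶠ x in unitsNhdsZero K, φ x = 0) :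
    φ ∈ SSx K := by
  obtain ⟨R, hR⟩ := exists_eq_zero_of_lt_norm hψne hφ
  obtain ⟨ε, hε, hφε⟩ := unitsNhdsZero_hasBasis.eventually_iff.1 hφ0
  refine ⟨isLocallyConstant_of_mem_smoothVectors hφ,
    HasCompactSupport.intro (isCompact_annulus hε R) fun x hx ↦ ?_⟩
  rcases not_and_or.1 hx with hx | hx
  · exact hφε (not_le.1 hx)
  · exact hR x (not_le.1 hx)

lemma eventually_eq_zero_of_mem_SSx {φ : Kˣ → ℂ} (hφ : φ ∈ SSx K) :
    ∀ᶠ x in unitsNhdsZero K, φ x = 0 := by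
  have hclosed : IsClosed ((↑) '' tsupport φ : Set K) :=
    (hφ.2.isCompact.image Units.continuous_val).isClosed
  have h0 : (0 : K) ∈ ((↑) '' tsupport φ : Set K)ᶜ := by
    rintro ⟨x, -, hx⟩
    exact x.ne_zero hx
  filter_upwards [preimage_mem_comap (hclosed.isOpen_compl.mem_nhds h0)] with x hx
  exact image_eq_zero_of_notMem_tsupport fun hxφ ↦ hx ⟨x, hxφ, rfl⟩

lemma eventually_apply_mul_eq_of_mem_SSx {φ : Kˣ → ℂ} (hφ : φ ∈ SSx K) :
    ∀ᶠ u in 𝓝 (1 : Kˣ), ∀ x, φ (x * u) = φ x := by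
  have hnear : ∀ᶠ u in 𝓝 (1 : Kˣ), ∀ x ∈ tsupport φ, φ (x * u) = φ x := by
    refine hφ.2.isCompact.eventually_forall_of_forall_eventually fun x _ ↦ ?_
    have hmul := (hφ.1.comp_continuous
      (continuous_snd.mul continuous_fst : Continuous fun z : Kˣ × Kˣ ↦ z.2 * z.1)).eventually_eq
        (1, x)
    have hsnd := (hφ.1.comp_continuous (continuous_snd (X := Kˣ))).eventually_eq (1, x)
    filter_upwards [hmul, hsnd] with z hz hz'
    simp_all
  have hinv : Tendsto (·⁻¹) (𝓝 (1 : Kˣ)) (𝓝 1) := continuous_inv.tendsto' 1 1 inv_one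
  filter_upwards [hnear, hinv.eventually hnear] with u hu hu' x
  by_cases hx : φ (x * u) = 0
  · by_contra hne
    exact hne (hu x (subset_tsupport _ fun h ↦ hne (hx.trans h.symm)))
  · simpa using (hu' (x * u) (subset_tsupport _ hx)).symm

variable {V : Type*} [AddCommGroup V] [Module ℂ V] {ρ : Rep K V} {Λ : V →ₗ[ℂ] ℂ}

lemma IsWhittaker.equivariant_kirillov (hΛ : IsWhittaker ρ ψ Λ) :
    GRep.Equivariant ρ (repCx K ψ) (kirillov ρ Λ) := by
  intro g v
  funext x
  have hg : xT x * g = sS (g.s * x) * xT (x * g.t) := by ext <;> simp [mul_comm]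
  rw [kirillov_apply, repCx_apply, kirillov_apply, ← hΛ, ← Module.End.mul_apply, ← map_mul, hg,
    map_mul, Module.End.mul_apply]

section Cut

variable {N : Subgroup (Multiplicative K)} {v : V}

lemma IsWhittaker.kirillov_eq_zero_of_mem_grpInv (hΛ : IsWhittaker ρ ψ Λ)
    (hv : v ∈ grpInv (twist ρ ψ) N) {x : Kˣ} {b : Multiplicative K} (hb : b ∈ N)
    (hψb : ψ (b.toAdd * (x - 1)) ≠ 1) : kirillov ρ Λ v x = 0 := by
  have hfix : ρ (sS b.toAdd) v = ψ b.toAdd • v := twist_apply_eq_iff.1 (hv b hb)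
  have heq := hΛ.apply_xT_sS x b.toAdd v
  rw [hfix, map_smul, map_smul, smul_eq_mul] at heq
  by_contra hne
  have hψx : ψ b.toAdd = ψ (b.toAdd * x) := mul_right_cancel₀ hne heq
  rw [mul_sub, mul_one, AddChar.map_sub_eq_div, ← hψx, div_self (ψ.val_isUnit _).ne_zero] at hψb
  exact hψb rfl

lemma IsWhittaker.kirillov_eq_zero_of_mem_grpCoinvKer (hΛ : IsWhittaker ρ ψ Λ)
    (hv : v ∈ grpCoinvKer (twist ρ ψ) N) {x : Kˣ}
    (hψN : ∀ b ∈ N, ψ (b.toAdd * (x - 1)) = 1) : kirillov ρ Λ v x = 0 := by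
  refine (Submodule.span_le.2 ?_ :
    grpCoinvKer (twist ρ ψ) N ≤ LinearMap.ker (LinearMap.proj x ∘ₗ kirillov ρ Λ)) hv
  rintro _ ⟨b, hb, u, rfl⟩
  have hψx : ψ (-b.toAdd) * ψ (b.toAdd * x) = 1 := by
    rw [← AddChar.map_add_eq_mul, ← hψN b hb]
    ring_nf
  have heq : kirillov ρ Λ (twist ρ ψ b u) x = kirillov ρ Λ u x := by
    rw [← ofAdd_toAdd b, twist_ofAdd_apply, map_smul, Pi.smul_apply, kirillov_apply,
      hΛ.apply_xT_sS, smul_eq_mul, ← mul_assoc, hψx, one_mul, kirillov_apply]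
  rw [SetLike.mem_coe, LinearMap.mem_ker, map_sub, sub_eq_zero]
  exact heq

end Cut

variable [IsUltrametricDist K]

lemma mem_span_translates_indicator {φ : Kˣ → ℂ} (hφ : φ ∈ SSx K) {ε : ℝ} (hε : 0 < ε)
    (hε1 : ε ≤ 1) (hφε : ∀ u ∈ unitBall K ε, ∀ x, φ (x * u) = φ x) :
    φ ∈ Submodule.span ℂ
      (Set.range fun y ↦ repCx K ψ (xT y) ((unitBall K ε).indicator 1)) := by
  let U := unitBallSubgroup K hε hε1
  have hU : IsOpen (U : Set Kˣ) := Metric.isOpen_ball.preimage Units.continuous_val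
  have : DiscreteTopology (Kˣ ⧸ U) := QuotientGroup.discreteTopology hU
  have hfinite : ((QuotientGroup.mk : Kˣ → Kˣ ⧸ U) '' tsupport φ).Finite :=
    (hφ.2.isCompact.image QuotientGroup.continuous_mk).finite_of_discrete
  have hmem (x : Kˣ) (p : Kˣ ⧸ U) : x * p.out⁻¹ ∈ unitBall K ε ↔ p = QuotientGroup.mk x := by
    conv_rhs => rw [← QuotientGroup.out_eq' p, QuotientGroup.eq, mul_comm]
    rfl
  have hsum : φ = ∑ p ∈ hfinite.toFinset,
      φ p.out • repCx K ψ (xT p.out⁻¹) ((unitBall K ε).indicator 1) := by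
    funext x
    simp only [Finset.sum_apply, Pi.smul_apply, smul_eq_mul, repCx_apply, xT_s, xT_t, zero_mul,
      AddChar.map_zero_eq_one, Set.indicator_apply, hmem, Pi.one_apply, mul_ite, mul_one, mul_zero,
      Finset.sum_ite_eq', Set.Finite.mem_toFinset]
    split_ifs with hx
    · have hout := (hmem x (QuotientGroup.mk x)).2 rfl
      simpa using hφε _ hout (QuotientGroup.mk x : Kˣ ⧸ U).out
    · exact image_eq_zero_of_notMem_tsupport fun hxφ ↦ hx ⟨x, hxφ, rfl⟩
  rw [hsum]
  exact Submodule.sum_mem _ fun p _ ↦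
    Submodule.smul_mem _ _ (Submodule.subset_span ⟨p.out⁻¹, rfl⟩)

variable [ProperSpace K]

lemma IsWhittaker.exists_kirillov_eq_indicator (hψ : IsLocallyConstant ψ) (hψne : ψ ≠ 1)
    (hρ : Smooth ρ) (hΛ : IsWhittaker ρ ψ Λ) (v : V) {ε : ℝ} (hε : 0 < ε) :
    ∃ w, v - w ∈ sTwistKer ρ ψ ∧ kirillov ρ Λ w = (unitBall K ε).indicator (kirillov ρ Λ v) := by
  obtain ⟨c, hc, hψc⟩ := exists_addChar_conductor hψ hψne
  have hc0 : 0 < ‖c‖ := norm_pos_iff.2 fun h ↦ hc (by rw [h, AddChar.map_zero_eq_one])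
  lift ε to ℝ≥0 using hε.le
  let N := closedBallSubgroup K (‖c‖₊ / ε)
  obtain ⟨w, hw, u, hu, rfl⟩ := Submodule.mem_sup.1 ((codisjoint_grpInv_grpCoinvKer (N := N)
    ((smooth_twist hρ hψ).exists_isFiniteRelIndex _)).eq_top ▸ Submodule.mem_top (x := v))
  refine ⟨w, ?_, funext fun x ↦ ?_⟩
  · rw [add_sub_cancel_left, sTwistKer_eq_grpCoinvKer]
    exact grpCoinvKer_mono _ le_top hu
  by_cases hx : x ∈ unitBall K ε
  · rw [Set.indicator_of_mem hx, map_add, Pi.add_apply,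
      hΛ.kirillov_eq_zero_of_mem_grpCoinvKer hu fun b hb ↦ hψc _ ?_, add_zero]
    rw [norm_mul]
    calc ‖b.toAdd‖ * ‖(x : K) - 1‖ ≤ ‖c‖ / ε * ‖(x : K) - 1‖ := by gcongr; exact hb
      _ < ‖c‖ / ε * ε := by gcongr; exact mem_unitBall.1 hx
      _ = ‖c‖ := div_mul_cancel₀ _ hε.ne'
  · rw [Set.indicator_of_notMem hx]
    rw [mem_unitBall, not_lt] at hx
    have hx0 : (x : K) - 1 ≠ 0 := norm_pos_iff.1 (hε.trans_le hx)
    refine hΛ.kirillov_eq_zero_of_mem_grpInv hw (b := .ofAdd (c / (x - 1))) ?_ ?_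
    · rw [mem_closedBallSubgroup, toAdd_ofAdd, norm_div, NNReal.coe_div, coe_nnnorm]
      gcongr
    · rwa [toAdd_ofAdd, div_mul_cancel₀ _ hx0]

lemma IsWhittaker.eventually_indicator_mem_range_kirillov (hψ : IsLocallyConstant ψ)
    (hψne : ψ ≠ 1) (hρ : Smooth ρ) (hΛ : IsWhittaker ρ ψ Λ) (hΛ0 : Λ ≠ 0) :
    ∀ᶠ ε in 𝓝[>] 0, (unitBall K ε).indicator 1 ∈ LinearMap.range (kirillov ρ Λ) := by
  obtain ⟨v, hv⟩ := DFunLike.ne_iff.1 hΛ0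
  obtain ⟨r, hr, hvr⟩ := nhds_one_hasBasis_unitBall.eventually_iff.1
    (eventually_xT_of_mem_smoothVectors (hρ v))
  filter_upwards [Ioo_mem_nhdsGT hr] with ε hε
  obtain ⟨w, -, hw⟩ := hΛ.exists_kirillov_eq_indicator hψ hψne hρ v hε.1
  refine ⟨(Λ v)⁻¹ • w, ?_⟩
  funext u
  rw [map_smul, hw, Pi.smul_apply, smul_eq_mul]
  by_cases hu : u ∈ unitBall K ε
  · have hur : u ∈ unitBall K r := mem_unitBall.2 ((mem_unitBall.1 hu).trans hε.2)
    rw [Set.indicator_of_mem hu, Set.indicator_of_mem hu, kirillov_apply, hvr hur,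
      inv_mul_cancel₀ hv, Pi.one_apply]
  · rw [Set.indicator_of_notMem hu, Set.indicator_of_notMem hu, mul_zero]

theorem IsWhittaker.SSx_le_range_kirillov (hψ : IsLocallyConstant ψ) (hψne : ψ ≠ 1)
    (hρ : Smooth ρ) (hΛ : IsWhittaker ρ ψ Λ) (hΛ0 : Λ ≠ 0) :
    SSx K ≤ LinearMap.range (kirillov ρ Λ) := by
  intro φ hφ
  obtain ⟨r, hr, hφr⟩ := nhds_one_hasBasis_unitBall.eventually_iff.1
    (eventually_apply_mul_eq_of_mem_SSx hφ)
  obtain ⟨ε, hmem, hε, hεr⟩ := ((hΛ.eventually_indicator_mem_range_kirillov hψ hψne hρ hΛ0).and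
    (Ioo_mem_nhdsGT (lt_min hr one_pos))).exists
  refine Submodule.span_le.2 ?_ (mem_span_translates_indicator (ψ := ψ) hφ hε
    (hεr.le.trans (min_le_right _ _)) fun u hu ↦ hφr ?_)
  · rintro _ ⟨y, rfl⟩
    exact GRep.range_invariant _ _ _ hΛ.equivariant_kirillov _ _ hmem
  · exact mem_unitBall.2 ((mem_unitBall.1 hu).trans (hεr.trans_le (min_le_left _ _)))

theorem IsWhittaker.map_kirillov_sCoinvKer (hψ : IsLocallyConstant ψ) (hψne : ψ ≠ 1)
    (hρ : Smooth ρ) (hΛ : IsWhittaker ρ ψ Λ) (hΛ0 : Λ ≠ 0) :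
    (sCoinvKer ρ).map (kirillov ρ Λ) = SSx K := by
  apply le_antisymm
  · rw [sCoinvKer, Submodule.map_span, Submodule.span_le]
    rintro _ ⟨_, ⟨b, v, rfl⟩, rfl⟩
    refine mem_SSx_of_mem_smoothVectors hψne
      (hρ.map_mem_smoothVectors hΛ.equivariant_kirillov _) ?_
    filter_upwards [addChar_mul_eventually_eq_one hψ b] with x hx
    rw [map_sub, hΛ.equivariant_kirillov, Pi.sub_apply, repCx_apply, sS_s, sS_t, mul_one, hx,
      one_mul, sub_self]
  · obtain ⟨v, hv⟩ := DFunLike.ne_iff.1 hΛ0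
    obtain ⟨b, hb⟩ := AddChar.ne_one_iff.1 hψne
    let Λ' := Λ ∘ₗ (sCoinvKer ρ).subtype
    have hΛ' : IsWhittaker (GRep.sub ρ (sCoinvKer_invariant ρ)) ψ Λ' := fun c w ↦ hΛ c w
    have hΛ'0 : Λ' ≠ 0 := fun h ↦ by
      have h0 := LinearMap.congr_fun h ⟨_, Submodule.subset_span ⟨b, v, rfl⟩⟩
      change Λ (ρ (sS b) v - v) = 0 at h0
      rw [map_sub, hΛ, ← sub_one_mul] at h0
      exact mul_ne_zero (sub_ne_zero.2 hb) hv h0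
    intro φ hφ
    obtain ⟨w, rfl⟩ := hΛ'.SSx_le_range_kirillov hψ hψne (hρ.sub _) hΛ'0 hφ
    exact ⟨w, w.2, rfl⟩

end Kirillov

section Factors

open Aff

section Field

variable {K : Type*} [Field K] {V : Type*} [AddCommGroup V] [Module ℂ V] {ρ : Rep K V}

lemma GRep.Invariant.inf {A B : Submodule ℂ V} (hA : GRep.Invariant ρ A)
    (hB : GRep.Invariant ρ B) : GRep.Invariant ρ (A ⊓ B) :=
  fun g v hv ↦ ⟨hA g v hv.1, hB g v hv.2⟩

lemma GRep.Invariant.sup {A B : Submodule ℂ V} (hA : GRep.Invariant ρ A)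
    (hB : GRep.Invariant ρ B) : GRep.Invariant ρ (A ⊔ B) := by
  intro g v hv
  obtain ⟨a, ha, b, hb, rfl⟩ := Submodule.mem_sup.1 hv
  rw [map_add]
  exact Submodule.add_mem_sup (hA g a ha) (hB g b hb)

lemma sCoinvKer_le_iff {A : Submodule ℂ V} :
    sCoinvKer ρ ≤ A ↔ ∀ b v, ρ (sS b) v - v ∈ A := by
  rw [sCoinvKer, Submodule.span_le]
  exact ⟨fun h b v ↦ h ⟨b, v, rfl⟩, by rintro h _ ⟨b, v, rfl⟩; exact h b v⟩

namespace CompSeries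

variable (c : CompSeries ρ) {i : ℕ} {C : Submodule ℂ V}

lemma inf_le_or_le_sup (hi : i < c.n) (hC : GRep.Invariant ρ C) :
    C ⊓ c.W (i + 1) ≤ c.W i ∨ c.W (i + 1) ≤ c.W i ⊔ C := by
  refine (c.maximal i hi _ ((c.inv i).sup (hC.inf (c.inv _))) le_sup_left
    (sup_le (c.lt i hi).le inf_le_right)).imp sup_eq_left.1 fun h ↦ ?_
  exact h.ge.trans (sup_le_sup_left inf_le_left _)

lemma irred_subquot (hi : i < c.n) :
    GRep.Irred (GRep.subquot ρ (c.inv i) (c.inv (i + 1))) := by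
  refine ⟨Submodule.Quotient.nontrivial_iff.2 fun h ↦ ?_, fun U hU ↦ ?_⟩
  · exact (c.lt i hi).not_ge (Submodule.comap_subtype_eq_top.1 h)
  let A := (c.W i).comap (c.W (i + 1)).subtype
  let C := (U.comap A.mkQ).map (c.W (i + 1)).subtype
  have hC : GRep.Invariant ρ C := by
    rintro g _ ⟨w, hw, rfl⟩
    exact ⟨GRep.sub ρ (c.inv (i + 1)) g w, hU g _ hw, rfl⟩
  have hCW : C ⊓ c.W (i + 1) = C := inf_eq_left.2 (Submodule.map_subtype_le _ _)
  rcases c.inf_le_or_le_sup hi hC with h | h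
  · refine .inl ((Submodule.eq_bot_iff _).2 fun x hx ↦ ?_)
    obtain ⟨w, rfl⟩ := A.mkQ_surjective x
    exact (Submodule.Quotient.mk_eq_zero A).2 (h (hCW.ge ⟨w, hx, rfl⟩))
  · refine .inr (Submodule.eq_top_iff'.2 fun x ↦ ?_)
    obtain ⟨w, rfl⟩ := A.mkQ_surjective x
    obtain ⟨a, ha, _, ⟨w', hw', rfl⟩, hw⟩ := Submodule.mem_sup.1 (h w.2)
    convert (show A.mkQ w' ∈ U from hw') using 1
    refine (Submodule.Quotient.eq A).2 (?_ : (w : V) - w' ∈ c.W i)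
    simpa [← hw] using ha

/-- The group `S` acts trivially on the `i`-th factor of the composition series. -/
def IsSTrivial (c : CompSeries ρ) (i : ℕ) : Prop :=
  ∀ w ∈ c.W (i + 1), ∀ b, ρ (sS b) w - w ∈ c.W i

variable {c}

lemma isSTrivial_iff_sInv_subquot :
    c.IsSTrivial i ↔ sInv (GRep.subquot ρ (c.inv i) (c.inv (i + 1))) = ⊤ := by
  rw [Submodule.eq_top_iff', (Submodule.mkQ_surjective _).forall, Subtype.forall]
  refine forall₂_congr fun w hw ↦ forall_congr' fun b ↦ ?_
  change _ ↔ Submodule.Quotient.mk (GRep.sub ρ (c.inv (i + 1)) (sS b) ⟨w, hw⟩) =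
    Submodule.Quotient.mk (p := (c.W i).comap (c.W (i + 1)).subtype) ⟨w, hw⟩
  rw [Submodule.Quotient.eq]
  rfl

lemma le_sup_sCoinvKer (hi : i < c.n) (hc : ¬c.IsSTrivial i) :
    c.W (i + 1) ≤ c.W i ⊔ sCoinvKer ρ := by
  refine (c.inf_le_or_le_sup hi (sCoinvKer_invariant ρ)).resolve_left fun h ↦ hc fun w hw b ↦ ?_
  exact h ⟨sCoinvKer_le_iff.1 le_rfl b w, Submodule.sub_mem _ (c.inv _ _ _ hw) hw⟩

end CompSeries

lemma IsWhittaker.apply_eq_zero_of_fixed {ψ : AddChar K ℂ} {Λ : V →ₗ[ℂ] ℂ}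
    (hΛ : IsWhittaker ρ ψ Λ) (hψne : ψ ≠ 1) {v : V} (hv : ∀ b, Λ (ρ (sS b) v - v) = 0) :
    Λ v = 0 := by
  obtain ⟨b, hb⟩ := AddChar.ne_one_iff.1 hψne
  have h := hv b
  rw [map_sub, hΛ, ← sub_one_mul] at h
  exact (mul_eq_zero.1 h).resolve_left (sub_ne_zero.2 hb)

lemma IsWhittaker.filtration_le_ker {ψ : AddChar K ℂ} {Λ : V →ₗ[ℂ] ℂ}
    (hΛ : IsWhittaker ρ ψ Λ) (hψne : ψ ≠ 1) {F : ℕ → Submodule ℂ V} {n : ℕ}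
    (h0 : F 0 ≤ LinearMap.ker Λ)
    (hF : ∀ k < n, (∀ w ∈ F (k + 1), ∀ b, ρ (sS b) w - w ∈ F k) ∨
      F (k + 1) ≤ F k ⊔ LinearMap.ker Λ) :
    F n ≤ LinearMap.ker Λ := by
  induction n with
  | zero => exact h0
  | succ n ih =>
    have hn := ih fun k hk ↦ hF k (hk.trans n.lt_succ_self)
    rcases hF n n.lt_succ_self with htriv | hle
    · exact fun w hw ↦ hΛ.apply_eq_zero_of_fixed hψne fun b ↦ hn (htriv w hw b)
    · exact hle.trans (sup_le hn le_rfl)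

lemma IsWhittaker.sInv_le_ker_kirillov {ψ : AddChar K ℂ} {Λ : V →ₗ[ℂ] ℂ}
    (hΛ : IsWhittaker ρ ψ Λ) (hψne : ψ ≠ 1) : sInv ρ ≤ LinearMap.ker (kirillov ρ Λ) := by
  refine fun v hv ↦ LinearMap.mem_ker.2 (funext fun x ↦ ?_)
  rw [kirillov_apply]
  refine hΛ.apply_eq_zero_of_fixed hψne fun b ↦ ?_
  rw [sInv_invariant ρ (xT x) v hv b, sub_self, map_zero]

end Field

variable {K : Type*} [NontriviallyNormedField K] {ψ : AddChar K ℂ}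
variable {V : Type*} [AddCommGroup V] [Module ℂ V] {ρ : Rep K V}

lemma sInv_SRep_eq_bot (hψ : IsLocallyConstant ψ) (hψne : ψ ≠ 1) : sInv (SRep ψ hψ) = ⊥ := by
  refine (Submodule.eq_bot_iff _).2 fun f hf ↦ Subtype.ext (funext fun x ↦ ?_)
  obtain ⟨b, hb⟩ := AddChar.ne_one_iff.1 hψne
  have h : ψ (b / x * x) * f.1 (x * 1) = f.1 x :=
    congr_fun (congr_arg Subtype.val (hf (b / x))) x
  rw [div_mul_cancel₀ _ x.ne_zero, mul_one] at h
  exact (mul_eq_zero.1 ((sub_one_mul _ _).trans (sub_eq_zero.2 h))).resolve_left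
    (sub_ne_zero.2 hb)

lemma CompSeries.not_iso_SRep_of_isSTrivial (hψ : IsLocallyConstant ψ) (hψne : ψ ≠ 1)
    {c : CompSeries ρ} {i : ℕ} (hi : i < c.n) (hc : c.IsSTrivial i) :
    ¬GRep.Iso (GRep.subquot ρ (c.inv i) (c.inv (i + 1))) (SRep ψ hψ) := by
  rintro ⟨e, he⟩
  have := (c.irred_subquot hi).1
  obtain ⟨x, hx⟩ := exists_ne (0 : c.W (i + 1) ⧸ (c.W i).comap (c.W (i + 1)).subtype)
  refine hx ((e.map_eq_zero_iff).1 ((Submodule.eq_bot_iff _).1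
    (sInv_SRep_eq_bot hψ hψne) _ fun b ↦ ?_))
  rw [← he, (isSTrivial_iff_sInv_subquot.1 hc ▸ Submodule.mem_top : x ∈ sInv _) b]

lemma IsWhittaker.ker_kirillov_inf_le {Λ : V →ₗ[ℂ] ℂ} (hΛ : IsWhittaker ρ ψ Λ) (hψne : ψ ≠ 1)
    (hΛ0 : Λ ≠ 0) {c : CompSeries ρ} {i : ℕ} (hi : i < c.n)
    (hc : ∀ j < c.n, j ≠ i → c.IsSTrivial j) :
    LinearMap.ker (kirillov ρ Λ) ⊓ c.W (i + 1) ≤ c.W i := by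
  have hker : LinearMap.ker (kirillov ρ Λ) ≤ LinearMap.ker Λ := fun w hw ↦ by
    rw [LinearMap.mem_ker, ← kirillov_apply_one (ρ := ρ), LinearMap.mem_ker.1 hw, Pi.zero_apply]
  refine (c.inf_le_or_le_sup hi (GRep.ker_invariant _ _ _ hΛ.equivariant_kirillov)).resolve_right
    fun h ↦ hΛ0 (LinearMap.ker_eq_top.1 (top_unique (c.top.ge.trans ?_)))
  refine hΛ.filtration_le_ker hψne (c.bot.le.trans bot_le) fun k hk ↦ ?_
  rcases eq_or_ne k i with rfl | hki
  · exact .inr (h.trans (sup_le_sup_left hker _))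
  · exact .inl (hc k hk hki)

variable [IsUltrametricDist K] [ProperSpace K]

theorem GRep.Irred.iso_SRep (hψ : IsLocallyConstant ψ) (hψne : ψ ≠ 1) (hρ : Smooth ρ)
    (hirr : GRep.Irred ρ) (hS : sInv ρ ≠ ⊤) : GRep.Iso ρ (SRep ψ hψ) := by
  obtain ⟨v, hv⟩ : ∃ v, v ∉ sInv ρ := by simpa [Submodule.eq_top_iff'] using hS
  obtain ⟨Λ, hΛ, x, hx⟩ := exists_isWhittaker_apply_ne_zero hψ hψne hρ hv
  have hΛ0 : Λ ≠ 0 := by rintro rfl; exact hx rfl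
  have hinj : Function.Injective (kirillov ρ Λ) := by
    refine LinearMap.ker_eq_bot.1 ((hirr.2 _
      (GRep.ker_invariant _ _ _ hΛ.equivariant_kirillov)).resolve_right fun h ↦ ?_)
    exact hx (congr_fun (LinearMap.congr_fun (LinearMap.ker_eq_top.1 h) v) x)
  have hcoinv : sCoinvKer ρ = ⊤ := by
    refine (hirr.2 _ (sCoinvKer_invariant ρ)).resolve_left fun h ↦ hv fun b ↦ sub_eq_zero.1 ?_
    exact (Submodule.mem_bot ℂ).1 (h ▸ sCoinvKer_le_iff.1 le_rfl b v)
  have hrange : LinearMap.range (kirillov ρ Λ) = SSx K := by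
    rw [← hΛ.map_kirillov_sCoinvKer hψ hψne hρ hΛ0, hcoinv, Submodule.map_top]
  exact ⟨(LinearEquiv.ofInjective _ hinj).trans (LinearEquiv.ofEq _ _ hrange),
    fun g v ↦ Subtype.ext (hΛ.equivariant_kirillov g v)⟩

namespace CompSeries

lemma isSTrivial_or_iso_SRep (hψ : IsLocallyConstant ψ) (hψne : ψ ≠ 1) (hρ : Smooth ρ)
    {c : CompSeries ρ} {i : ℕ} (hi : i < c.n) :
    c.IsSTrivial i ∨ GRep.Iso (GRep.subquot ρ (c.inv i) (c.inv (i + 1))) (SRep ψ hψ) :=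
  or_iff_not_imp_left.2 fun hc ↦ (c.irred_subquot hi).iso_SRep hψ hψne ((hρ.sub _).quot _)
    (isSTrivial_iff_sInv_subquot.not.1 hc)

theorem deg_SRep_eq_one_iff (hψ : IsLocallyConstant ψ) (hψne : ψ ≠ 1) (hρ : Smooth ρ)
    (c : CompSeries ρ) :
    c.deg (SRep ψ hψ) = 1 ↔ ∃ i < c.n, ∀ j < c.n, c.IsSTrivial j ↔ j ≠ i := by
  have hiso (j : Fin c.n) : GRep.Iso (GRep.subquot ρ (c.inv j.1) (c.inv (j.1 + 1)))
      (SRep ψ hψ) ↔ ¬c.IsSTrivial j :=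
    ⟨fun h hj ↦ not_iso_SRep_of_isSTrivial hψ hψne j.2 hj h,
      (isSTrivial_or_iso_SRep hψ hψne hρ j.2).resolve_left⟩
  simp only [deg, Finset.card_eq_one, Finset.ext_iff, Finset.mem_filter, Finset.mem_univ,
    true_and, Finset.mem_singleton, hiso, Fin.exists_iff, Fin.forall_iff, Fin.mk.injEq,
    exists_prop]
  exact exists_congr fun i ↦ and_congr_right fun _ ↦ forall₂_congr fun j _ ↦ not_iff_comm.trans
    iff_comm

lemma le_sInv_of_inf_le (hψ : IsLocallyConstant ψ) (hψne : ψ ≠ 1) (hρ : Smooth ρ)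
    {c : CompSeries ρ} {i : ℕ} (hc : ∀ j < c.n, j ≠ i → c.IsSTrivial j) {N : Submodule ℂ V}
    (hN : GRep.Invariant ρ N) (hNi : N ⊓ c.W (i + 1) ≤ c.W i) : N ≤ sInv ρ := by
  intro v hv
  by_contra hvS
  obtain ⟨Λ, hΛ, y, hy⟩ := exists_isWhittaker_apply_ne_zero hψ hψne (hρ.sub hN)
    (v := (⟨v, hv⟩ : N)) fun h ↦ hvS fun b ↦ congr_arg Subtype.val (h b)
  have htop := hΛ.filtration_le_ker hψne (F := fun k ↦ (c.W k).comap N.subtype) (n := c.n)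
    (fun w hw ↦ ?_) fun k hk ↦ ?_
  · exact hy (htop (c.top ▸ Submodule.mem_top))
  · rw [Submodule.mem_comap, c.bot, Submodule.mem_bot, Submodule.subtype_apply,
      Submodule.coe_eq_zero] at hw
    rw [hw]
    exact zero_mem _
  · rcases eq_or_ne k i with rfl | hki
    · exact .inr (le_sup_of_le_left fun w hw ↦ hNi ⟨w.2, hw⟩)
    · exact .inl fun w hw b ↦ hc k hk hki w hw b

theorem exists_ker_kirillov_eq_sInv (hψ : IsLocallyConstant ψ) (hψne : ψ ≠ 1) (hρ : Smooth ρ)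
    {c : CompSeries ρ} (hdeg : c.deg (SRep ψ hψ) = 1) :
    ∃ Λ, IsWhittaker ρ ψ Λ ∧ Λ ≠ 0 ∧ LinearMap.ker (kirillov ρ Λ) = sInv ρ := by
  obtain ⟨i, hi, htriv⟩ := (c.deg_SRep_eq_one_iff hψ hψne hρ).1 hdeg
  have htriv_of_ne (j : ℕ) (hj : j < c.n) : j ≠ i → c.IsSTrivial j := (htriv j hj).2
  obtain ⟨v, hv⟩ : ∃ v, v ∉ sInv ρ := by
    by_contra! h
    refine (htriv i hi).1 (fun w _ b ↦ ?_) rfl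
    rw [h w b, sub_self]
    exact zero_mem _
  obtain ⟨Λ, hΛ, x, hx⟩ := exists_isWhittaker_apply_ne_zero hψ hψne hρ hv
  have hΛ0 : Λ ≠ 0 := by rintro rfl; exact hx rfl
  refine ⟨Λ, hΛ, hΛ0, le_antisymm ?_ (hΛ.sInv_le_ker_kirillov hψne)⟩
  exact le_sInv_of_inf_le hψ hψne hρ htriv_of_ne
    (GRep.ker_invariant _ _ _ hΛ.equivariant_kirillov)
    (hΛ.ker_kirillov_inf_le hψne hΛ0 hi htriv_of_ne)

end CompSeries

end Factors

section FiniteDimensionality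

open Filter Topology Aff

section Schur

variable {G C : Type*} [AddCommGroup C] [Module ℂ C]

lemma GRep.Irred.isIrreducible [Monoid G] {τ : Representation ℂ G C} (hτ : GRep.Irred τ) :
    τ.IsIrreducible where
  exists_pair_ne := by
    have := hτ.1
    exact ⟨⊥, ⊤, fun h ↦ bot_ne_top (congr_arg Subrepresentation.toSubmodule h)⟩
  eq_bot_or_eq_top U :=
    (hτ.2 U.toSubmodule fun g _ hv ↦ U.apply_mem_toSubmodule g hv).imp
      (fun h ↦ Subrepresentation.toSubmodule_injective h)
      fun h ↦ Subrepresentation.toSubmodule_injective h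

lemma algebraMap_complex_bijective_of_rank_le_aleph0 {L : Type*} [Field L] [Algebra ℂ L]
    (hL : Module.rank ℂ L ≤ Cardinal.aleph0) : Function.Bijective (algebraMap ℂ L) := by
  have : Algebra.IsAlgebraic ℂ L := by
    refine ⟨fun x ↦ by_contra fun hx ↦ Cardinal.aleph0_lt_continuum.not_ge ?_⟩
    have hcard := (Transcendental.linearIndependent_sub_inv hx).cardinal_lift_le_rank.trans
      (Cardinal.lift_le_aleph0.2 hL)
    rwa [Cardinal.mk_complex, Cardinal.lift_continuum] at hcard
  have := Algebra.IsAlgebraic.isIntegral (K := ℂ) (A := L)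
  exact IsAlgClosed.algebraMap_bijective_of_isIntegral

theorem GRep.Irred.finrank_eq_one [CommGroup G] {τ : Representation ℂ G C}
    (hτ : GRep.Irred τ) (hC : Module.rank ℂ C ≤ Cardinal.aleph0) :
    Module.finrank ℂ C = 1 := by
  have := hτ.isIrreducible
  obtain ⟨I, hI, ⟨e⟩⟩ := isSimpleModule_iff_quot_maximal.1
    (inferInstance : IsSimpleModule (MonoidAlgebra ℂ G) τ.asModule)
  let _ : Field (MonoidAlgebra ℂ G ⧸ I) := Ideal.Quotient.field I
  let e' : C ≃ₗ[ℂ] MonoidAlgebra ℂ G ⧸ I :=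
    τ.asModuleEquiv.symm.trans (e.restrictScalars ℂ)
  have hbij : Function.Bijective (algebraMap ℂ (MonoidAlgebra ℂ G ⧸ I)) :=
    algebraMap_complex_bijective_of_rank_le_aleph0
      (Cardinal.lift_le_aleph0.1 (e'.lift_rank_eq ▸ Cardinal.lift_le_aleph0.2 hC))
  rw [e'.finrank_eq, ← (LinearEquiv.ofBijective (Algebra.linearMap _ _) hbij).finrank_eq,
    Module.finrank_self]

lemma apply_eq_det_smul [Monoid G] (τ : Representation ℂ G C) (hC : Module.finrank ℂ C = 1)
    (g : G) (v : C) : τ g v = LinearMap.det (τ g) • v := by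
  obtain ⟨a, ha⟩ := (LinearEquiv.smul_id_of_finrank_eq_one hC).surjective (τ g)
  have ha' : τ g = a • LinearMap.id := ha.symm
  rw [ha', LinearMap.det_smul, hC, LinearMap.det_id, pow_one, mul_one]
  rfl

end Schur

section Smooth

variable {C : Type*} [AddCommGroup C] [Module ℂ C]

lemma Smooth.countable_orbit {G : Type*} [Group G] [TopologicalSpace G] [ContinuousMul G]
    [SecondCountableTopology G] {σ : Representation ℂ G C} (hσ : Smooth σ) (v : C) :
    (Set.range fun g ↦ σ g v).Countable := by
  obtain ⟨D, hDc, hDd⟩ := TopologicalSpace.exists_countable_dense G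
  refine (hDc.image fun g ↦ σ g v).mono ?_
  rintro _ ⟨g, rfl⟩
  have hmem : ∀ᶠ g' in 𝓝 g, σ (g⁻¹ * g') v = v :=
    ((continuous_const_mul g⁻¹).tendsto' g 1 (inv_mul_cancel g)).eventually (hσ v)
  obtain ⟨d, hdD, hd⟩ := hDd.inter_nhds_nonempty hmem
  refine ⟨d, hdD, ?_⟩
  have h := congr_arg (σ g) (show σ (g⁻¹ * d) v = v from hd)
  rwa [← Module.End.mul_apply, ← map_mul, mul_inv_cancel_left] at h

lemma GRep.Irred.span_orbit_eq_top {G : Type*} [Monoid G] {σ : Representation ℂ G C}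
    (hσ : GRep.Irred σ) {v : C} (hv : v ≠ 0) :
    Submodule.span ℂ (Set.range fun g ↦ σ g v) = ⊤ := by
  have hmem : v ∈ Submodule.span ℂ (Set.range fun g ↦ σ g v) :=
    Submodule.subset_span ⟨1, by simp⟩
  refine (hσ.2 _ fun g w hw ↦ ?_).resolve_left fun h ↦ hv ((Submodule.eq_bot_iff _).1 h v hmem)
  refine (Submodule.span_le.2 ?_ : _ ≤ (Submodule.span ℂ _).comap (σ g)) hw
  rintro _ ⟨g', rfl⟩
  exact Submodule.subset_span ⟨g * g', by simp⟩

lemma GRep.Irred.finrank_eq_one_of_smooth {G : Type*} [CommGroup G] [TopologicalSpace G]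
    [ContinuousMul G] [SecondCountableTopology G] {σ : Representation ℂ G C}
    (hirr : GRep.Irred σ) (hσ : Smooth σ) : Module.finrank ℂ C = 1 := by
  have := hirr.1
  obtain ⟨v, hv⟩ := exists_ne (0 : C)
  refine hirr.finrank_eq_one ?_
  rw [← rank_top, ← hirr.span_orbit_eq_top hv]
  exact (rank_span_le _).trans (Cardinal.le_aleph0_iff_set_countable.2 (hσ.countable_orbit v))

lemma exists_invariant_irred {G : Type*} [Monoid G] (τ : Representation ℂ G C)
    [FiniteDimensional ℂ C] [Nontrivial C] :
    ∃ (N : Submodule ℂ C) (hN : GRep.Invariant τ N), GRep.Irred (GRep.sub τ hN) := by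
  obtain ⟨N, ⟨hN0, hN⟩, hmin⟩ := wellFounded_lt.has_min
    {N : Submodule ℂ C | N ≠ ⊥ ∧ GRep.Invariant τ N} ⟨⊤, top_ne_bot, fun _ _ _ ↦ trivial⟩
  refine ⟨N, hN, Submodule.nontrivial_iff_ne_bot.2 hN0, fun U hU ↦ or_iff_not_imp_left.2 fun h ↦ ?_⟩
  have hmap : GRep.Invariant τ (U.map N.subtype) := by
    rintro g _ ⟨w, hw, rfl⟩
    exact ⟨GRep.sub τ hN g w, hU g w hw, rfl⟩
  have hle : U.map N.subtype ≤ N := Submodule.map_subtype_le _ _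
  have hU0 : U.map N.subtype ≠ ⊥ := fun h0 ↦ h (Submodule.map_injective_of_injective
    N.injective_subtype (h0.trans (Submodule.map_bot _).symm))
  refine Submodule.map_injective_of_injective N.injective_subtype ?_
  rw [Submodule.map_subtype_top]
  exact hle.eq_of_not_lt (hmin _ ⟨hU0, hmap⟩)

end Smooth

variable {K : Type*} [NontriviallyNormedField K]

section Character

variable {C : Type*} [AddCommGroup C] [Module ℂ C]

lemma exists_smoothMulChar_tEigenT_ne_bot [FiniteDimensional ℂ C] [Nontrivial C]
    {τ : Representation ℂ Kˣ C} (hτ : Smooth τ) :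
    ∃ χ, SmoothMulChar χ ∧ tEigenT τ χ ≠ ⊥ := by
  obtain ⟨N, hN, hirr⟩ := exists_invariant_irred τ
  have := hirr.1
  have hN1 : Module.finrank ℂ N = 1 :=
    hirr.finrank_eq_one (Module.rank_lt_aleph0 ℂ N).le
  obtain ⟨v, hv⟩ := exists_ne (0 : N)
  have hdet := apply_eq_det_smul (GRep.sub τ hN) hN1
  let χ : Kˣ →* ℂˣ := (LinearMap.det.comp (GRep.sub τ hN)).toHomUnits
  have hker : ∀ᶠ u in 𝓝 (1 : Kˣ), χ u = 1 := by
    filter_upwards [hτ.sub hN v] with u hu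
    rw [hdet] at hu
    exact Units.ext (smul_left_injective ℂ hv (hu.trans (one_smul ℂ v).symm))
  refine ⟨χ, Subgroup.isOpen_of_mem_nhds χ.ker hker, (Submodule.ne_bot_iff _).2 ⟨v, fun u ↦ ?_, ?_⟩⟩
  · exact congr_arg Subtype.val (hdet u v)
  · exact fun h ↦ hv (Subtype.ext h)

end Character

variable [ProperSpace K] {V : Type*} [AddCommGroup V] [Module ℂ V] {ρ : Rep K V}
  {c : CompSeries ρ}

instance : SecondCountableTopology Kˣ :=
  have : SecondCountableTopology Kᵐᵒᵖ :=
    MulOpposite.opHomeomorph.symm.isEmbedding.secondCountableTopology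
  Units.isEmbedding_embedProduct.secondCountableTopology

lemma CompSeries.finiteDimensional_of_isSTrivial (hρ : Smooth ρ) {i : ℕ} (hi : i < c.n)
    (hc : c.IsSTrivial i) :
    FiniteDimensional ℂ (c.W (i + 1) ⧸ (c.W i).comap (c.W (i + 1)).subtype) := by
  let σ := GRep.subquot ρ (c.inv i) (c.inv (i + 1))
  have hS (b : K) (x) : σ (sS b) x = x :=
    (isSTrivial_iff_sInv_subquot.1 hc ▸ Submodule.mem_top : x ∈ sInv σ) b
  have hirr : GRep.Irred (σ.comp xTHom) := by
    refine ⟨(c.irred_subquot hi).1, fun U hU ↦ (c.irred_subquot hi).2 U fun g x hx ↦ ?_⟩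
    have hg : σ g x = σ (xT g.t) x := by
      conv_lhs => rw [aff_decomp g, map_mul, Module.End.mul_apply, hS]
    exact hg ▸ hU g.t x hx
  have hσ : Smooth σ := (hρ.sub (c.inv (i + 1))).quot _
  exact FiniteDimensional.of_finrank_eq_succ
    (hirr.finrank_eq_one_of_smooth (hσ.comp _ continuous_xTHom))

lemma fg_map_of_finiteDimensional_quotient {W : Type*} [AddCommGroup W] [Module ℂ W]
    {f : V →ₗ[ℂ] W} {A B : Submodule ℂ V} (hA : (A.map f).FG)
    [FiniteDimensional ℂ (B ⧸ A.comap B.subtype)] : (B.map f).FG := by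
  obtain ⟨Q, hQ⟩ := (A.comap B.subtype).exists_isCompl
  have := Module.Finite.equiv (Submodule.quotientEquivOfIsCompl _ Q hQ)
  have hB : B ≤ A ⊔ Q.map B.subtype := by
    conv_lhs => rw [← Submodule.map_subtype_top B, ← hQ.sup_eq_top, Submodule.map_sup]
    exact sup_le_sup_right (Submodule.map_comap_le _ _) _
  have hfg : ((A ⊔ Q.map B.subtype).map f).FG := by
    rw [Submodule.map_sup]
    exact hA.sup (((Module.Finite.iff_fg.1 this).map _).map _)
  exact hfg.of_le (Submodule.map_mono hB)

theorem CompSeries.finiteDimensional_quotient_sCoinvKer (hρ : Smooth ρ) (c : CompSeries ρ) :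
    FiniteDimensional ℂ (V ⧸ sCoinvKer ρ) := by
  have hfg (i : ℕ) (hi : i ≤ c.n) : ((c.W i).map (sCoinvKer ρ).mkQ).FG := by
    induction i with
    | zero => rw [c.bot, Submodule.map_bot]; exact Submodule.fg_bot
    | succ i ih =>
      by_cases hc : c.IsSTrivial i
      · have := finiteDimensional_of_isSTrivial hρ hi hc
        exact fg_map_of_finiteDimensional_quotient (ih (i.le_succ.trans hi))
      · refine (ih (i.le_succ.trans hi)).of_le ?_
        refine (Submodule.map_mono (c.le_sup_sCoinvKer hi hc)).trans_eq ?_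
        rw [Submodule.map_sup, Submodule.mkQ_map_self, sup_bot_eq]
  have htop := hfg c.n le_rfl
  rw [c.top, Submodule.map_top, Submodule.range_mkQ] at htop
  exact ⟨htop⟩

theorem Perfect.sInv_eq_bot [IsUltrametricDist K] (hρ : Smooth ρ) (c : CompSeries ρ)
    (hp : Perfect ρ) : sInv ρ = ⊥ := by
  have := c.finiteDimensional_quotient_sCoinvKer hρ
  have hinj : Function.Injective ((sCoinvKer ρ).mkQ ∘ₗ (sInv ρ).subtype) := by
    rw [← LinearMap.ker_eq_bot, LinearMap.ker_comp, Submodule.ker_mkQ]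
    exact Submodule.disjoint_iff_comap_eq_bot.1 (disjoint_sInv_sCoinvKer hρ)
  have := Module.Finite.of_injective _ hinj
  by_contra hne
  have := Submodule.nontrivial_iff_ne_bot.2 hne
  have hsm : Smooth (sInvT ρ) := (hρ.sub (sInv_invariant ρ)).comp _ continuous_xTHom
  obtain ⟨χ, hχ, hχne⟩ := exists_smoothMulChar_tEigenT_ne_bot hsm
  obtain ⟨v, hv, hv0⟩ := (Submodule.ne_bot_iff _).1 hχne
  have hmem : v.1 ∈ tEigen ρ χ := fun u ↦ congr_arg Subtype.val (hv u)
  rw [hp χ hχ] at hmem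
  exact hv0 (Subtype.ext hmem)

end FiniteDimensionality


section Germ

open Filter Topology

variable {X : Type*} [AddCommGroup X] [Module ℂ X] [FiniteDimensional ℂ X]

lemma eventually_linearMap_eq {α W : Type*} [AddCommGroup W] [Module ℂ W] {l : Filter α}
    {Φ Ψ : α → X →ₗ[ℂ] W} (h : ∀ y, ∀ᶠ a in l, Φ a y = Ψ a y) : ∀ᶠ a in l, Φ a = Ψ a := by
  have hbasis : ∀ᶠ a in l, ∀ i,
      Φ a (Module.finBasis ℂ X i) = Ψ a (Module.finBasis ℂ X i) :=
    eventually_all.2 fun i ↦ h _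
  filter_upwards [hbasis] with a ha
  exact (Module.finBasis ℂ X).ext ha

variable {K : Type*} [NontriviallyNormedField K]

lemma mem_of_norm_le_one {S : Submonoid Kˣ} {ϖ : Kˣ} (hϖ : ‖(ϖ : K)‖ < 1)
    (hS : ∀ u : Kˣ, ‖(ϖ : K)‖ ≤ ‖(u : K)‖ → ‖(u : K)‖ ≤ 1 → u ∈ S) {u : Kˣ}
    (hu : ‖(u : K)‖ ≤ 1) : u ∈ S := by
  have hpos (x : Kˣ) : 0 < ‖(x : K)‖ := norm_pos_iff.2 x.ne_zero
  obtain ⟨n, hlt, hle⟩ := exists_nat_pow_near_of_lt_one (hpos u) hu (hpos ϖ) hϖ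
  have hnorm : ‖((u / ϖ ^ n : Kˣ) : K)‖ = ‖(u : K)‖ / ‖(ϖ : K)‖ ^ n := by
    rw [Units.val_div_eq_div_val, Units.val_pow_eq_pow_val, norm_div, norm_pow]
  rw [← div_mul_cancel u (ϖ ^ n)]
  refine mul_mem (hS _ ?_ ?_) (pow_mem (hS ϖ le_rfl hϖ.le) n)
  · rw [hnorm, le_div_iff₀ (pow_pos (hpos ϖ) n), ← pow_succ']
    exact hlt.le
  · rw [hnorm]
    exact div_le_one_of_le₀ hle (by positivity)

variable {τ : Representation ℂ Kˣ X} {F : X →ₗ[ℂ] (Kˣ → ℂ)}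

lemma eventually_forall_mem_apply_mul (hτ : Smooth τ)
    (hF : ∀ y, ∀ᶠ u in 𝓝 (1 : Kˣ), ∀ x, F y (x * u) = F y x)
    (hFτ : ∀ u y, ∀ᶠ x in unitsNhdsZero K, F y (x * u) = F (τ u y) x) {C : Set Kˣ}
    (hC : IsCompact C) : ∀ᶠ x in unitsNhdsZero K, ∀ u ∈ C, ∀ y, F y (x * u) = F (τ u y) x := by
  refine hC.induction_on
    (p := fun S ↦ ∀ᶠ x in unitsNhdsZero K, ∀ u ∈ S, ∀ y, F y (x * u) = F (τ u y) x)
    (by simp) (fun S T hST hT ↦ hT.mono fun x hx u hu ↦ hx u (hST hu)) ?_ fun u₀ _ ↦ ?_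
  · intro S T hS hT
    filter_upwards [hS, hT] with x hxS hxT u hu
    exact hu.elim (hxS u) (hxT u)
  have hFnear : ∀ᶠ v in 𝓝 (1 : Kˣ), LinearMap.funLeft ℂ ℂ (· * v) ∘ₗ F = F :=
    eventually_linearMap_eq fun y ↦ (hF y).mono fun v hv ↦ funext hv
  have hτnear : ∀ᶠ v in 𝓝 (1 : Kˣ), τ v = LinearMap.id := eventually_linearMap_eq hτ
  have hzero : ∀ᶠ x in unitsNhdsZero K,
      LinearMap.proj (x * u₀) ∘ₗ F = LinearMap.proj x ∘ₗ F ∘ₗ τ u₀ :=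
    eventually_linearMap_eq (hFτ u₀)
  have htendsto : Tendsto (u₀⁻¹ * ·) (𝓝 u₀) (𝓝 1) :=
    (continuous_const_mul u₀⁻¹).tendsto' u₀ 1 (by simp)
  refine ⟨_, mem_nhdsWithin_of_mem_nhds (htendsto.eventually (hFnear.and hτnear)), ?_⟩
  filter_upwards [hzero] with x hx u ⟨hFu, hτu⟩ y
  have hu : τ u y = τ u₀ y := by
    conv_lhs => rw [← mul_inv_cancel_left u₀ u, map_mul, hτu]
    rfl
  calc F y (x * u) = F y (x * u₀ * (u₀⁻¹ * u)) := by rw [mul_assoc, mul_inv_cancel_left]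
    _ = F y (x * u₀) := congrFun (LinearMap.congr_fun hFu y) _
    _ = F (τ u y) x := by rw [hu]; exact LinearMap.congr_fun hx y

theorem exists_eventually_eq_matrixCoeff [ProperSpace K] (hτ : Smooth τ)
    (hF : ∀ y, ∀ᶠ u in 𝓝 (1 : Kˣ), ∀ x, F y (x * u) = F y x)
    (hFτ : ∀ u y, ∀ᶠ x in unitsNhdsZero K, F y (x * u) = F (τ u y) x) :
    ∃ L : X →ₗ[ℂ] ℂ, ∀ y, ∀ᶠ x in unitsNhdsZero K, F y x = matrixCoeff τ L y x := by
  obtain ⟨ϖ, hϖ0, hϖ⟩ := NormedField.exists_norm_lt_one K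
  lift ϖ to Kˣ using (norm_pos_iff.1 hϖ0).isUnit
  obtain ⟨ε, hε, hannulus⟩ := unitsNhdsZero_hasBasis.eventually_iff.1
    (eventually_forall_mem_apply_mul hτ hF hFτ (isCompact_annulus hϖ0 1))
  let S : Submonoid Kˣ :=
    { carrier := {u | ‖(u : K)‖ ≤ 1 ∧ ∀ x : Kˣ, ‖(x : K)‖ < ε → ∀ y, F y (x * u) = F (τ u y) x}
      one_mem' := by simp
      mul_mem' := fun {u v} ⟨hu1, hu⟩ ⟨hv1, hv⟩ ↦ by
        refine ⟨by simpa using mul_le_one₀ hu1 (norm_nonneg _) hv1, fun x hx y ↦ ?_⟩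
        have hxu : ‖((x * u : Kˣ) : K)‖ < ε := by
          rw [Units.val_mul, norm_mul]
          exact (mul_le_of_le_one_right (norm_nonneg _) hu1).trans_lt hx
        rw [← mul_assoc, hv _ hxu, hu _ hx, map_mul, Module.End.mul_apply] }
  have hS (u : Kˣ) (hu : ‖(u : K)‖ ≤ 1) : u ∈ S :=
    mem_of_norm_le_one (S := S) hϖ (fun v hv hv1 ↦ ⟨hv1, fun x hx ↦ hannulus hx v ⟨hv, hv1⟩⟩) hu
  obtain ⟨x₀, hx₀⟩ := Filter.nonempty_of_mem ((unitsNhdsZero_hasBasis (K := K)).mem_of_mem hε)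
  refine ⟨LinearMap.proj x₀ ∘ₗ F ∘ₗ τ x₀⁻¹, fun y ↦ unitsNhdsZero_hasBasis.eventually_iff.2
    ⟨‖(x₀ : K)‖, norm_pos_iff.2 x₀.ne_zero, fun x hx ↦ ?_⟩⟩
  have hle : ‖((x₀⁻¹ * x : Kˣ) : K)‖ ≤ 1 := by
    rw [mul_comm, ← div_eq_mul_inv, Units.val_div_eq_div_val, norm_div]
    exact div_le_one_of_le₀ hx.le (norm_nonneg _)
  calc F y x = F y (x₀ * (x₀⁻¹ * x)) := by rw [mul_inv_cancel_left]
    _ = F (τ (x₀⁻¹ * x) y) x₀ := (hS _ hle).2 x₀ hx₀ y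
    _ = _ := by rw [map_mul]; rfl

theorem mem_ker_matrixCoeff_of_eventually {L : X →ₗ[ℂ] ℂ} {y : X}
    (hy : ∀ᶠ x in unitsNhdsZero K, matrixCoeff τ L y x = 0) :
    y ∈ LinearMap.ker (matrixCoeff τ L) := by
  let Z := Submodule.span ℂ (Set.range fun u ↦ τ u y)
  have hZ (z : Z) : ∀ᶠ x in unitsNhdsZero K, (L ∘ₗ τ x ∘ₗ Z.subtype) z = 0 := by
    obtain ⟨z, hz⟩ := z
    induction hz using Submodule.span_induction with
    | mem z hz =>
      obtain ⟨u, rfl⟩ := hz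
      simpa using (tendsto_mul_right_unitsNhdsZero u).eventually hy
    | zero => simp
    | add z w hz hw ihz ihw =>
      filter_upwards [ihz, ihw] with x hxz hxw
      simp_all
    | smul c z hz ih =>
      filter_upwards [ih] with x hx
      simp_all
  obtain ⟨x₀, hx₀⟩ := (eventually_linearMap_eq (Ψ := 0) hZ).exists
  refine mem_ker_matrixCoeff.2 fun x ↦ ?_
  have := LinearMap.congr_fun hx₀ ⟨τ (x₀⁻¹ * x) y, Submodule.subset_span ⟨_, rfl⟩⟩
  rwa [← mul_inv_cancel_left x₀ x, map_mul]

end Germ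

section Automorphism

theorem exists_isUnit_add_smul {k R : Type*} [Field k] [Infinite k] [CommRing R] [Algebra k R]
    [Finite (MaximalSpectrum R)] {b e : R} (h : IsCoprime b e) :
    ∃ t : k, IsUnit (b + t • e) := by
  by_contra! hunit
  choose M hM hmem using fun t : k ↦ exists_max_ideal_of_mem_nonunits (hunit t)
  obtain ⟨s, t, hst, hMst⟩ :=
    Finite.exists_ne_map_eq_of_infinite fun t ↦ (⟨M t, hM t⟩ : MaximalSpectrum R)
  have hMeq : M s = M t := congrArg MaximalSpectrum.asIdeal hMst
  have hs : b + s • e ∈ M t := hMeq ▸ hmem s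
  have he : e ∈ M t := by
    have hdiff : (s - t) • e ∈ M t := by
      convert (M t).sub_mem hs (hmem t) using 1
      rw [sub_smul, add_sub_add_left_eq_sub]
    simpa [smul_smul, sub_ne_zero.2 hst] using (M t).smul_of_tower_mem (s - t)⁻¹ hdiff
  have hb : b ∈ M t := by
    simpa using (M t).sub_mem (hmem t) ((M t).smul_of_tower_mem t he)
  obtain ⟨u, v, huv⟩ := h
  exact (hM t).ne_top ((M t).eq_top_iff_one.2
    (huv ▸ add_mem ((M t).mul_mem_left u hb) ((M t).mul_mem_left v he)))

variable {k X : Type*} [Field k] [AddCommGroup X] [Module k X]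

lemma exists_asAlgebraHom_eq [FiniteDimensional k X] {G : Type*} [Group G]
    {τ : Representation k G X} {L L' : X →ₗ[k] k}
    (h : LinearMap.ker (matrixCoeff τ L) ≤ LinearMap.ker L') :
    ∃ a, L' = L ∘ₗ τ.asAlgebraHom a := by
  let W := LinearMap.range (LinearMap.compRight k L ∘ₗ τ.asAlgebraHom.toLinearMap)
  suffices hW : L' ∈ W by
    obtain ⟨a, ha⟩ := hW
    exact ⟨a, ha.symm⟩
  rw [← Subspace.dualCoannihilator_dualAnnihilator_eq (W := W), Submodule.mem_dualAnnihilator]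
  refine fun y hy ↦ h (mem_ker_matrixCoeff.2 fun x ↦ ?_)
  have := (Submodule.mem_dualCoannihilator _).1 hy _ ⟨MonoidAlgebra.of k G x, rfl⟩
  simpa using this

theorem exists_linearEquiv_of_ker_matrixCoeff_eq [Infinite k] [FiniteDimensional k X] {G : Type*}
    [CommGroup G] {τ : Representation k G X} {L L' : X →ₗ[k] k}
    (h : LinearMap.ker (matrixCoeff τ L) = LinearMap.ker (matrixCoeff τ L')) :
    ∃ A : X ≃ₗ[k] X, (∀ u y, A (τ u y) = τ u (A y)) ∧ ∀ y, L' y = L (A y) := by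
  let R := MonoidAlgebra k G ⧸ RingHom.ker τ.asAlgebraHom
  let φ : R →ₐ[k] Module.End k X := Ideal.kerLiftAlg τ.asAlgebraHom
  have hφ : Function.Injective φ := Ideal.kerLiftAlg_injective _
  have : Module.Finite k R := Module.Finite.of_injective φ.toLinearMap hφ
  have : IsArtinianRing R := IsArtinianRing.of_finite k R
  have hker (L : X →ₗ[k] k) : LinearMap.ker (matrixCoeff τ L) ≤ LinearMap.ker L := fun y hy ↦ by
    simpa using mem_ker_matrixCoeff.1 hy 1
  obtain ⟨a, ha⟩ := exists_asAlgebraHom_eq (h.trans_le (hker L'))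
  obtain ⟨c, hc⟩ := exists_asAlgebraHom_eq (h.symm.trans_le (hker L))
  let b' : R := Ideal.Quotient.mk _ a
  let c' : R := Ideal.Quotient.mk _ c
  have hb (y : X) : L (φ b' y) = L' y := (LinearMap.congr_fun ha y).symm
  have hc (y : X) : L' (φ c' y) = L y := (LinearMap.congr_fun hc y).symm
  have hcoprime : IsCoprime b' (1 - b' * c') := ⟨c', 1, by ring⟩
  obtain ⟨t, ht⟩ := exists_isUnit_add_smul (k := k) hcoprime
  obtain ⟨u, hu⟩ := ht
  refine ⟨LinearMap.GeneralLinearGroup.generalLinearEquiv k X (Units.map φ u),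
    fun x y ↦ ?_, fun y ↦ ?_⟩
  · have hx : φ (Ideal.Quotient.mk _ (MonoidAlgebra.of k G x)) = τ x :=
      τ.asAlgebraHom_of x
    change (φ u * τ x) y = (τ x * φ u) y
    rw [← hx, ← map_mul, ← map_mul, mul_comm]
  · change L' y = L (φ u y)
    rw [hu]
    simp [hb, hc]

end Automorphism

section PiZero

open Aff

variable {K : Type*} [Field K] {V X : Type*} [AddCommGroup V] [Module ℂ V] [AddCommGroup X]
variable [Module ℂ X] {ρ : Rep K V} {τ : Representation ℂ Kˣ X} {q : V →ₗ[ℂ] X}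

/-- The map `q` exhibits the `T`-module `τ` as the space of `S`-coinvariants `π₀` of `ρ`. -/
structure IsPiZero (ρ : Rep K V) (τ : Representation ℂ Kˣ X) (q : V →ₗ[ℂ] X) : Prop where
  surjective : Function.Surjective q
  ker_eq : LinearMap.ker q = sCoinvKer ρ
  map_xT : ∀ u v, q (ρ (xT u) v) = τ u (q v)

lemma isPiZero_mkQ (ρ : Rep K V) : IsPiZero ρ (piZeroT ρ) (sCoinvKer ρ).mkQ :=
  ⟨Submodule.mkQ_surjective _, Submodule.ker_mkQ _, fun _ _ ↦ rfl⟩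

namespace IsPiZero

lemma map_apply (hq : IsPiZero ρ τ q) (g : Aff K) (v : V) : q (ρ g v) = τ g.t (q v) := by
  have hS (b : K) : q (ρ (sS b) v) = q v :=
    LinearMap.sub_mem_ker_iff.1 (hq.ker_eq ▸ sCoinvKer_le_iff.1 le_rfl b v)
  conv_lhs => rw [aff_decomp g, map_mul, Module.End.mul_apply, hq.map_xT, hS]

lemma iso (hq : IsPiZero ρ τ q) : GRep.Iso (piZeroT ρ) τ := by
  refine ⟨(Submodule.quotEquivOfEq _ _ hq.ker_eq.symm).trans
    (q.quotKerEquivOfSurjective hq.surjective), fun u x ↦ ?_⟩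
  obtain ⟨v, rfl⟩ := Submodule.Quotient.mk_surjective _ x
  exact hq.map_xT u v

lemma smooth [TopologicalSpace K] (hq : IsPiZero ρ τ q) (hρ : Smooth ρ) : Smooth τ := by
  intro x
  obtain ⟨v, rfl⟩ := hq.surjective x
  filter_upwards [eventually_xT_of_mem_smoothVectors (hρ v)] with u hu
  rw [← hq.map_xT, hu]

end IsPiZero

end PiZero

section KirillovExpansion

open Filter Topology Aff

variable {K : Type*} [NontriviallyNormedField K] {V X : Type*} [AddCommGroup V] [Module ℂ V]
variable [AddCommGroup X] [Module ℂ X] {ρ : Rep K V} {ψ : AddChar K ℂ}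
variable {τ : Representation ℂ Kˣ X} {q : V →ₗ[ℂ] X} {Λ : V →ₗ[ℂ] ℂ} {L : X →ₗ[ℂ] ℂ}

/-- The Kirillov map of `Λ` describes `ρ` up to `S`-invariants: it maps the kernel of the projection
`q` to the `S`-coinvariants `τ` onto `𝕊`, and the germ at `0` of `kirillov ρ Λ v` is the matrix
coefficient of `L` at `q v`. -/
structure IsKirillovExpansion (ρ : Rep K V) (ψ : AddChar K ℂ) (τ : Representation ℂ Kˣ X)
    (q : V →ₗ[ℂ] X) (Λ : V →ₗ[ℂ] ℂ) (L : X →ₗ[ℂ] ℂ) : Prop where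
  isWhittaker : IsWhittaker ρ ψ Λ
  ker_kirillov : LinearMap.ker (kirillov ρ Λ) = sInv ρ
  map_kirillov : (sCoinvKer ρ).map (kirillov ρ Λ) = SSx K
  eventually_eq : ∀ v, ∀ᶠ x in unitsNhdsZero K, kirillov ρ Λ v x = matrixCoeff τ L (q v) x

lemma kirillov_apply_mul (v : V) (x u : Kˣ) :
    kirillov ρ Λ v (x * u) = kirillov ρ Λ (ρ (xT u) v) x := by
  rw [kirillov, matrixCoeff_apply, map_mul]
  rfl

theorem IsPiZero.exists_isKirillovExpansion [IsUltrametricDist K] [ProperSpace K]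
    [FiniteDimensional ℂ X] (hψ : IsLocallyConstant ψ) (hψne : ψ ≠ 1) (hρ : Smooth ρ)
    {c : CompSeries ρ} (hdeg : c.deg (SRep ψ hψ) = 1) (hq : IsPiZero ρ τ q) :
    ∃ Λ L, IsKirillovExpansion ρ ψ τ q Λ L := by
  obtain ⟨Λ, hΛ, hΛ0, hker⟩ := c.exists_ker_kirillov_eq_sInv hψ hψne hρ hdeg
  have hmap := hΛ.map_kirillov_sCoinvKer hψ hψne hρ hΛ0
  have germ_eq {v w : V} (h : q v = q w) :
      ∀ᶠ x in unitsNhdsZero K, kirillov ρ Λ v x = kirillov ρ Λ w x := by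
    have hmem : v - w ∈ sCoinvKer ρ := hq.ker_eq ▸ LinearMap.sub_mem_ker_iff.2 h
    filter_upwards [eventually_eq_zero_of_mem_SSx (hmap ▸ Submodule.mem_map_of_mem hmem)] with x hx
    rwa [map_sub, Pi.sub_apply, sub_eq_zero] at hx
  obtain ⟨s, hqs⟩ := q.exists_rightInverse_of_surjective (LinearMap.range_eq_top.2 hq.surjective)
  have hs (y : X) : q (s y) = y := LinearMap.congr_fun hqs y
  have uniformly_smooth (y : X) :
      ∀ᶠ u in 𝓝 1, ∀ x, kirillov ρ Λ (s y) (x * u) = kirillov ρ Λ (s y) x := by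
    filter_upwards [eventually_xT_of_mem_smoothVectors (hρ (s y))] with u hu x
    rw [kirillov_apply_mul, hu]
  have germ_equivariant (u : Kˣ) (y : X) : ∀ᶠ x in unitsNhdsZero K,
      kirillov ρ Λ (s y) (x * u) = kirillov ρ Λ (s (τ u y)) x := by
    filter_upwards [germ_eq (v := ρ (xT u) (s y)) (w := s (τ u y)) (by rw [hq.map_xT, hs, hs])]
      with x hx
    rw [kirillov_apply_mul, hx]
  obtain ⟨L, hL⟩ := exists_eventually_eq_matrixCoeff (F := kirillov ρ Λ ∘ₗ s) (hq.smooth hρ)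
    uniformly_smooth germ_equivariant
  refine ⟨Λ, L, hΛ, hker, hmap, fun v ↦ ?_⟩
  filter_upwards [hL (q v), germ_eq (hs (q v))] with x hLx hx
  rw [← hLx, ← hx, LinearMap.comp_apply]

namespace IsKirillovExpansion

lemma exists_mem_sCoinvKer [ProperSpace K] (h : IsKirillovExpansion ρ ψ τ q Λ L)
    (hψne : ψ ≠ 1) {φ : Kˣ → ℂ} (hφ : φ ∈ smoothVectors (repCx K ψ))
    (hφ0 : ∀ᶠ x in unitsNhdsZero K, φ x = 0) : ∃ w ∈ sCoinvKer ρ, kirillov ρ Λ w = φ :=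
  h.map_kirillov.ge (mem_SSx_of_mem_smoothVectors hψne hφ hφ0)

theorem mem_range_prod_kirillov [ProperSpace K] (h : IsKirillovExpansion ρ ψ τ q Λ L)
    (hψne : ψ ≠ 1) (hρ : Smooth ρ) (hq : IsPiZero ρ τ q) {y : X} {φ : Kˣ → ℂ} :
    (y, φ) ∈ LinearMap.range (q.prod (kirillov ρ Λ)) ↔
      φ ∈ smoothVectors (repCx K ψ) ∧ ∀ᶠ x in unitsNhdsZero K, φ x = matrixCoeff τ L y x := by
  have smooth_kirillov := hρ.map_mem_smoothVectors h.isWhittaker.equivariant_kirillov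
  constructor
  · rintro ⟨v, hv⟩
    obtain ⟨rfl, rfl⟩ := Prod.mk.inj hv
    exact ⟨smooth_kirillov v, h.eventually_eq v⟩
  · rintro ⟨hφ, hφy⟩
    obtain ⟨v, rfl⟩ := hq.surjective y
    obtain ⟨w, hw, hwφ⟩ := h.exists_mem_sCoinvKer hψne (sub_mem hφ (smooth_kirillov v)) (by
      filter_upwards [hφy, h.eventually_eq v] with x hx hvx
      rw [Pi.sub_apply, hx, hvx, sub_self])
    refine ⟨v + w, Prod.ext ?_ ?_⟩
    · exact (map_add q v w).trans (add_eq_left.2 (LinearMap.mem_ker.1 (hq.ker_eq.ge hw)))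
    · exact (map_add _ v w).trans (hwφ ▸ add_sub_cancel _ φ)

theorem ker_matrixCoeff [FiniteDimensional ℂ X] [ProperSpace K]
    (h : IsKirillovExpansion ρ ψ τ q Λ L) (hψne : ψ ≠ 1) (hρ : Smooth ρ) (hq : IsPiZero ρ τ q) :
    LinearMap.ker (matrixCoeff τ L) = (sInv ρ).map q := by
  ext y
  constructor
  · obtain ⟨v, rfl⟩ := hq.surjective y
    intro hv
    obtain ⟨w, hw, hwv⟩ := h.exists_mem_sCoinvKer hψne
      (hρ.map_mem_smoothVectors h.isWhittaker.equivariant_kirillov v) (by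
        filter_upwards [h.eventually_eq v] with x hx
        rw [hx, LinearMap.mem_ker.1 hv, Pi.zero_apply])
    refine ⟨v - w, h.ker_kirillov.le (LinearMap.sub_mem_ker_iff.2 hwv.symm), ?_⟩
    rw [map_sub, LinearMap.mem_ker.1 (hq.ker_eq.ge hw), sub_zero]
  · rintro ⟨v, hv, rfl⟩
    refine mem_ker_matrixCoeff_of_eventually ?_
    filter_upwards [h.eventually_eq v] with x hx
    rw [← hx, LinearMap.mem_ker.1 (h.ker_kirillov.ge hv), Pi.zero_apply]

lemma injective_prod_kirillov [ProperSpace K] [IsUltrametricDist K]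
    (h : IsKirillovExpansion ρ ψ τ q Λ L) (hρ : Smooth ρ)
    (hq : IsPiZero ρ τ q) : Function.Injective (q.prod (kirillov ρ Λ)) := by
  rw [← LinearMap.ker_eq_bot, LinearMap.ker_prod, hq.ker_eq, h.ker_kirillov, inf_comm,
    (disjoint_sInv_sCoinvKer hρ).eq_bot]

end IsKirillovExpansion

end KirillovExpansion

section Cyclic

variable {K : Type*} [Field K] {X : Type*} [AddCommGroup X] [Module ℂ X]
variable {τ : Representation ℂ Kˣ X} {L : X →ₗ[ℂ] ℂ}

lemma tCyclic_of_ker_matrixCoeff_eq_bot (h : LinearMap.ker (matrixCoeff τ L) = ⊥) :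
    TCyclic τ := by
  intro χ
  have hinj : Function.Injective (L.domRestrict (tEigenT τ χ)) := by
    refine (injective_iff_map_eq_zero _).2 fun ⟨x, hx⟩ hLx ↦ Subtype.ext ?_
    refine (Submodule.mem_bot ℂ).1 (h ▸ mem_ker_matrixCoeff.2 fun u ↦ ?_)
    rw [hx u, map_smul, show L x = 0 from hLx, smul_zero]
  simpa using LinearMap.finrank_le_finrank_of_injective hinj

lemma tCyclic_quot_of_eq_ker_matrixCoeff {U : Submodule ℂ X} (hU : GRep.Invariant τ U)
    (h : LinearMap.ker (matrixCoeff τ L) = U) : TCyclic (GRep.quot τ U hU) := by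
  have hUL : U ≤ LinearMap.ker L := fun x hx ↦ by
    simpa using mem_ker_matrixCoeff.1 (h.ge hx) 1
  refine tCyclic_of_ker_matrixCoeff_eq_bot (L := U.liftQ L hUL)
    ((Submodule.eq_bot_iff _).2 fun x hx ↦ ?_)
  obtain ⟨x, rfl⟩ := Submodule.Quotient.mk_surjective U x
  exact (Submodule.Quotient.mk_eq_zero U).2
    (h.le (mem_ker_matrixCoeff.2 fun u ↦ mem_ker_matrixCoeff.1 hx u))

end Cyclic

section FiberProduct

open Filter Aff

lemma exists_linearEquiv_matrixCoeff_apply_eq {G X Y : Type*} [CommGroup G] [AddCommGroup X]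
    [Module ℂ X] [FiniteDimensional ℂ X] [AddCommGroup Y] [Module ℂ Y]
    {τX : Representation ℂ G X} {τY : Representation ℂ G Y} {f : X →ₗ[ℂ] Y}
    (hf : GRep.Equivariant τX τY f) {L : X →ₗ[ℂ] ℂ} {L' : Y →ₗ[ℂ] ℂ}
    (hL : LinearMap.ker (matrixCoeff τX L) = LinearMap.ker f)
    (hL' : LinearMap.ker (matrixCoeff τY L') = ⊥) :
    ∃ A : X ≃ₗ[ℂ] X, (∀ u x, A (τX u x) = τX u (A x)) ∧
      ∀ x, matrixCoeff τY L' (f x) = matrixCoeff τX L (A x) := by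
  have hcoeff : matrixCoeff τX (L' ∘ₗ f) = matrixCoeff τY L' ∘ₗ f :=
    LinearMap.ext fun x ↦ funext fun u ↦ congrArg L' (hf u x)
  obtain ⟨A, hAτ, hAL⟩ := exists_linearEquiv_of_ker_matrixCoeff_eq (τ := τX) (L := L)
    (L' := L' ∘ₗ f) (by rw [hcoeff, LinearMap.ker_comp, hL', Submodule.comap_bot, hL])
  refine ⟨A, hAτ, fun x ↦ ?_⟩
  rw [← LinearMap.comp_apply, ← hcoeff]
  funext u
  rw [matrixCoeff_apply, hAL, hAτ, matrixCoeff_apply]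

lemma GRep.iso_of_range_eq {G V W Z : Type*} [Monoid G] [AddCommMonoid V] [Module ℂ V]
    [AddCommMonoid W] [Module ℂ W] [AddCommMonoid Z] [Module ℂ Z] {ρ : Representation ℂ G V}
    {σ : Representation ℂ G W} {ω : Representation ℂ G Z} {a : V →ₗ[ℂ] Z} {b : W →ₗ[ℂ] Z}
    (ha : GRep.Equivariant ρ ω a) (hb : GRep.Equivariant σ ω b) (hainj : Function.Injective a)
    (hbinj : Function.Injective b) (h : LinearMap.range a = LinearMap.range b) :
    GRep.Iso ρ σ := by
  let e := ((LinearEquiv.ofInjective a hainj).trans (.ofEq _ _ h)).trans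
    (LinearEquiv.ofInjective b hbinj).symm
  have he (v : V) : b (e v) = a v :=
    congrArg Subtype.val ((LinearEquiv.ofInjective b hbinj).apply_symm_apply _)
  exact ⟨e, fun g v ↦ hbinj (by rw [he, hb, he, ha])⟩

variable {K : Type*} [NontriviallyNormedField K] [IsUltrametricDist K] [ProperSpace K]
variable {ψ : AddChar K ℂ} {V X Y E : Type*} [AddCommGroup V] [Module ℂ V]
variable [AddCommGroup X] [Module ℂ X] [FiniteDimensional ℂ X] [AddCommGroup Y] [Module ℂ Y]
variable [AddCommGroup E] [Module ℂ E] {ρ : Rep K V} {ρE : Rep K E}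
variable {τX : Representation ℂ Kˣ X} {τY : Representation ℂ Kˣ Y}
variable {p : V →ₗ[ℂ] X} {q : E →ₗ[ℂ] Y} {f : X →ₗ[ℂ] Y}

lemma tCyclic_quot_sInv (hψ : IsLocallyConstant ψ) (hψne : ψ ≠ 1) (hρ : Smooth ρ)
    {c : CompSeries ρ} (hdeg : c.deg (SRep ψ hψ) = 1) (hp : IsPiZero ρ τX p)
    (hinv : GRep.Invariant τX ((sInv ρ).map p)) :
    TCyclic (GRep.quot τX ((sInv ρ).map p) hinv) := by
  obtain ⟨Λ, L, h⟩ := hp.exists_isKirillovExpansion hψ hψne hρ hdeg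
  exact tCyclic_quot_of_eq_ker_matrixCoeff hinv (h.ker_matrixCoeff hψne hρ hp)

theorem iso_fiberKer (hψ : IsLocallyConstant ψ) (hψne : ψ ≠ 1) (hρ : Smooth ρ)
    {c : CompSeries ρ} (hdeg : c.deg (SRep ψ hψ) = 1) (hp : IsPiZero ρ τX p)
    (hf : GRep.Equivariant τX τY f) (hfsurj : Function.Surjective f)
    (hfker : LinearMap.ker f = (sInv ρ).map p) (hρE : Smooth ρE) {cE : CompSeries ρE}
    (hEdeg : cE.deg (SRep ψ hψ) = 1) (hEinv : sInv ρE = ⊥) (hq : IsPiZero ρE τY q) :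
    GRep.Iso ρ (GRep.sub (prodRepTE τX ρE)
      (fiber_invariant τX ρE τY f q hf hq.ker_eq.ge hq.map_xT)) := by
  have := Module.Finite.of_surjective f hfsurj
  obtain ⟨Λ, L, h⟩ := hp.exists_isKirillovExpansion hψ hψne hρ hdeg
  obtain ⟨Λ', L', h'⟩ := hq.exists_isKirillovExpansion hψ hψne hρE hEdeg
  obtain ⟨A, hAτ, hcoeff_A⟩ := exists_linearEquiv_matrixCoeff_apply_eq hf (L := L) (L' := L')
    (by rw [h.ker_matrixCoeff hψne hρ hp, hfker])
    (by rw [h'.ker_matrixCoeff hψne hρE hq, hEinv, Submodule.map_bot])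
  have hinj : Function.Injective (kirillov ρE Λ') :=
    LinearMap.ker_eq_bot.1 (h'.ker_kirillov.trans hEinv)
  refine GRep.iso_of_range_eq (ω := prodRepTE τX (repCx K ψ)) (a := p.prod (kirillov ρ Λ))
    (b := A.toLinearMap.prodMap (kirillov ρE Λ') ∘ₗ (fiberKer f q).subtype)
    (fun g v ↦ Prod.ext (hp.map_apply g v) (h.isWhittaker.equivariant_kirillov g v))
    (fun g m ↦ Prod.ext (hAτ _ _) (h'.isWhittaker.equivariant_kirillov g _))
    (h.injective_prod_kirillov hρ hp)
    ((A.injective.prodMap hinj).comp Subtype.val_injective) (Submodule.ext fun ⟨z, φ⟩ ↦ ?_)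
  obtain ⟨x, rfl⟩ := A.surjective z
  rw [h.mem_range_prod_kirillov hψne hρ hp, ← hcoeff_A, ← h'.mem_range_prod_kirillov hψne hρE hq]
  constructor
  · rintro ⟨e, he⟩
    obtain ⟨hx, rfl⟩ := Prod.mk.inj he
    exact ⟨⟨(x, e), (mem_fiberKer f q _).2 hx.symm⟩, rfl⟩
  · rintro ⟨⟨⟨x', e⟩, hmem⟩, he⟩
    obtain ⟨hx, rfl⟩ := Prod.mk.inj he
    refine ⟨e, Prod.ext ?_ rfl⟩
    rw [← A.injective hx]
    exact ((mem_fiberKer f q _).1 hmem).symm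

end FiberProduct

section Extension

open Filter Topology Aff

section Field

variable {K : Type*} [Field K] {V W : Type*} [AddCommGroup V] [Module ℂ V] [AddCommGroup W]
variable [Module ℂ W] {ρ : Rep K V} {σ : Rep K W} {π : V →ₗ[ℂ] W}

theorem nonempty_compSeries [FiniteDimensional ℂ V] (ρ : Rep K V) : Nonempty (CompSeries ρ) := by
  let Inv := {U : Submodule ℂ V // GRep.Invariant ρ U}
  have invariant_bot : GRep.Invariant ρ (⊥ : Submodule ℂ V) := fun g v hv ↦ by
    rw [(Submodule.mem_bot ℂ).1 hv, map_zero]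
    exact zero_mem _
  have invariant_top : GRep.Invariant ρ (⊤ : Submodule ℂ V) := fun _ _ _ ↦ Submodule.mem_top
  have : Nonempty Inv := ⟨⊥, invariant_bot⟩
  obtain ⟨a, hmin, n, hmax, hcov⟩ := exists_covBy_seq_of_wellFoundedLT_wellFoundedGT Inv
  have hbot : a 0 = ⟨⊥, invariant_bot⟩ := hmin.eq_of_ge (bot_le : (⊥ : Submodule ℂ V) ≤ a 0)
  have htop : a n = ⟨⊤, invariant_top⟩ := hmax.eq_of_le (le_top : (a n : Submodule ℂ V) ≤ ⊤)
  exact ⟨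
    { n
      W := fun i ↦ a i
      bot := congrArg Subtype.val hbot
      top := congrArg Subtype.val htop
      inv := fun i ↦ (a i).2
      lt := fun i hi ↦ (hcov i hi).lt
      maximal := fun i hi C hC hle hge ↦
        ((hcov i hi).eq_or_eq (c := ⟨C, hC⟩) hle hge).imp (congrArg Subtype.val)
          (congrArg Subtype.val) }⟩

lemma GRep.iso_subquot_comap {G : Type*} [Group G] {ρ : Representation ℂ G V}
    {σ : Representation ℂ G W} (hπ : GRep.Equivariant ρ σ π) (hsurj : Function.Surjective π)
    {A B : Submodule ℂ V} {A' B' : Submodule ℂ W} (hAA' : A = A'.comap π) (hBB' : B = B'.comap π)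
    (hA : GRep.Invariant ρ A) (hB : GRep.Invariant ρ B) (hA' : GRep.Invariant σ A')
    (hB' : GRep.Invariant σ B') : GRep.Iso (GRep.subquot ρ hA hB) (GRep.subquot σ hA' hB') := by
  subst hAA' hBB'
  let r : B'.comap π →ₗ[ℂ] B' := π.restrict fun _ ↦ id
  have hr : Function.Surjective ((A'.comap B'.subtype).mkQ ∘ₗ r) :=
    (Submodule.mkQ_surjective _).comp fun ⟨w, hw⟩ ↦ by
      obtain ⟨v, rfl⟩ := hsurj w
      exact ⟨⟨v, hw⟩, rfl⟩
  have hker : (A'.comap π).comap (B'.comap π).subtype =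
      LinearMap.ker ((A'.comap B'.subtype).mkQ ∘ₗ r) := by
    rw [LinearMap.ker_comp, Submodule.ker_mkQ]
    rfl
  refine ⟨(Submodule.quotEquivOfEq _ _ hker).trans (LinearMap.quotKerEquivOfSurjective _ hr),
    fun g x ↦ ?_⟩
  obtain ⟨v, rfl⟩ := Submodule.mkQ_surjective _ x
  exact congrArg (Submodule.mkQ _) (Subtype.ext (hπ g v))

lemma GRep.Iso.congr {G V' : Type*} [Monoid G] [AddCommMonoid V'] [Module ℂ V']
    {ρ : Representation ℂ G V} {σ : Representation ℂ G W} {ω : Representation ℂ G V'}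
    (h : GRep.Iso ρ σ) : GRep.Iso ρ ω ↔ GRep.Iso σ ω := by
  obtain ⟨e, he⟩ := h
  constructor
  · rintro ⟨e', he'⟩
    refine ⟨e.symm.trans e', fun g w ↦ ?_⟩
    obtain ⟨v, rfl⟩ := e.surjective w
    simp [← he, he']
  · rintro ⟨e', he'⟩
    exact ⟨e.trans e', fun g v ↦ by simp [he, he']⟩

namespace CompSeries

lemma eq_or_eq_of_map_subtype_le {N : Submodule ℂ V} {hN : GRep.Invariant ρ N}
    (d : CompSeries (GRep.sub ρ hN)) {i : ℕ} (hi : i < d.n) {C : Submodule ℂ V}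
    (hC : GRep.Invariant ρ C) (hle : (d.W i).map N.subtype ≤ C)
    (hge : C ≤ (d.W (i + 1)).map N.subtype) :
    C = (d.W i).map N.subtype ∨ C = (d.W (i + 1)).map N.subtype := by
  have hmap : (C.comap N.subtype).map N.subtype = C := by
    rw [Submodule.map_comap_subtype, inf_eq_right]
    exact hge.trans (Submodule.map_subtype_le _ _)
  rw [← hmap, Submodule.map_le_map_iff_of_injective N.subtype_injective] at hle hge
  rcases d.maximal i hi _ (fun g v hv ↦ hC g v hv) hle hge with h | h
  exacts [.inl (hmap.symm.trans (h ▸ rfl)), .inr (hmap.symm.trans (h ▸ rfl))]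

lemma eq_or_eq_of_comap_le (hπ : GRep.Equivariant ρ σ π) (hsurj : Function.Surjective π)
    (c : CompSeries σ) {i : ℕ} (hi : i < c.n) {C : Submodule ℂ V} (hC : GRep.Invariant ρ C)
    (hle : (c.W i).comap π ≤ C) (hge : C ≤ (c.W (i + 1)).comap π) :
    C = (c.W i).comap π ∨ C = (c.W (i + 1)).comap π := by
  have hcomap : (C.map π).comap π = C :=
    Submodule.comap_map_eq_self ((Submodule.comap_mono bot_le).trans hle)
  rw [← hcomap, Submodule.comap_le_comap_iff_of_surjective hsurj] at hle hge
  rcases c.maximal i hi _ (GRep.map_invariant ρ σ π hπ C hC) hle hge with h | h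
  exacts [.inl (hcomap.symm.trans (h ▸ rfl)), .inr (hcomap.symm.trans (h ▸ rfl))]

/-- The concatenation of a chain in the kernel of `π` with the preimage of a chain in its target. -/
def extensionChain (hπ : GRep.Equivariant ρ σ π)
    (d : CompSeries (GRep.sub ρ (GRep.ker_invariant ρ σ π hπ))) (c : CompSeries σ) (i : ℕ) :
    Submodule ℂ V :=
  if i < d.n then (d.W i).map (LinearMap.ker π).subtype else (c.W (i - d.n)).comap π

variable {hπ : GRep.Equivariant ρ σ π}
variable {d : CompSeries (GRep.sub ρ (GRep.ker_invariant ρ σ π hπ))} {c : CompSeries σ}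

lemma extensionChain_add (i : ℕ) :
    extensionChain hπ d c (d.n + i) = (c.W i).comap π := by
  simp [extensionChain]

lemma extensionChain_of_le {i : ℕ} (hi : i ≤ d.n) :
    extensionChain hπ d c i = (d.W i).map (LinearMap.ker π).subtype := by
  rcases hi.lt_or_eq with hi | rfl
  · exact if_pos hi
  · simpa [c.bot, d.top] using extensionChain_add (d := d) (c := c) 0

variable (hπ d c) in
/-- A composition series of the source of a surjection `π`, obtained from composition series of its
kernel and of its target. -/
def extension (hsurj : Function.Surjective π) : CompSeries ρ where
  n := d.n + c.n
  W := extensionChain hπ d c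
  bot := by rw [extensionChain_of_le d.n.zero_le, d.bot, Submodule.map_bot]
  top := by rw [extensionChain_add, c.top, Submodule.comap_top]
  inv i := by
    rw [extensionChain]
    split_ifs
    · rintro g _ ⟨v, hv, rfl⟩
      exact ⟨_, d.inv i g v hv, rfl⟩
    · intro g v hv
      rw [Submodule.mem_comap, hπ]
      exact c.inv _ g _ hv
  lt i hi := by
    rcases lt_or_ge i d.n with hid | hid
    · rw [extensionChain_of_le hid.le, extensionChain_of_le hid]
      exact Submodule.map_strictMono_of_injective (Submodule.subtype_injective _) (d.lt i hid)
    · obtain ⟨k, rfl⟩ := Nat.exists_eq_add_of_le hid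
      rw [add_assoc, extensionChain_add, extensionChain_add]
      exact Submodule.comap_strictMono_of_surjective hsurj (c.lt k (Nat.add_lt_add_iff_left.1 hi))
  maximal i hi C hC := by
    rcases lt_or_ge i d.n with hid | hid
    · rw [extensionChain_of_le hid.le, extensionChain_of_le hid]
      exact d.eq_or_eq_of_map_subtype_le hid hC
    · obtain ⟨k, rfl⟩ := Nat.exists_eq_add_of_le hid
      rw [add_assoc, extensionChain_add, extensionChain_add]
      exact c.eq_or_eq_of_comap_le hπ hsurj (Nat.add_lt_add_iff_left.1 hi) hC

variable {hsurj : Function.Surjective π}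

lemma isSTrivial_extension (hker : LinearMap.ker π ≤ sInv ρ) {j : ℕ} (hj : j < d.n) :
    (extension hπ d c hsurj).IsSTrivial j := by
  intro w hw b
  change w ∈ extensionChain hπ d c (j + 1) at hw
  rw [extensionChain_of_le hj] at hw
  rw [hker (Submodule.map_subtype_le _ _ hw), sub_self]
  exact zero_mem _

variable (hπ d c hsurj) in
lemma iso_subquot_extension_add (j : ℕ) :
    GRep.Iso (GRep.subquot ρ ((extension hπ d c hsurj).inv (d.n + j))
      ((extension hπ d c hsurj).inv (d.n + j + 1))) (GRep.subquot σ (c.inv j) (c.inv (j + 1))) :=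
  GRep.iso_subquot_comap hπ hsurj (extensionChain_add (hπ := hπ) j)
    (extensionChain_add (hπ := hπ) (j + 1)) _ _ _ _

end CompSeries

lemma map_sCoinvKer (hπ : GRep.Equivariant ρ σ π) (hsurj : Function.Surjective π) :
    (sCoinvKer ρ).map π = sCoinvKer σ := by
  refine le_antisymm (Submodule.map_le_iff_le_comap.2 (sCoinvKer_le_comap ρ σ π hπ))
    (sCoinvKer_le_iff.2 fun b w ↦ ?_)
  obtain ⟨v, rfl⟩ := hsurj w
  exact ⟨_, sCoinvKer_le_iff.1 le_rfl b v, by rw [map_sub, hπ]⟩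

end Field

variable {K : Type*} [NontriviallyNormedField K] {ψ : AddChar K ℂ}
variable {V W : Type*} [AddCommGroup V] [Module ℂ V] [AddCommGroup W] [Module ℂ W]
variable {ρ : Rep K V} {σ : Rep K W} {π : V →ₗ[ℂ] W}

theorem CompSeries.deg_extension_SRep (hψ : IsLocallyConstant ψ) (hψne : ψ ≠ 1)
    (hπ : GRep.Equivariant ρ σ π) (hsurj : Function.Surjective π)
    (hker : LinearMap.ker π ≤ sInv ρ)
    (d : CompSeries (GRep.sub ρ (GRep.ker_invariant ρ σ π hπ))) (c : CompSeries σ) :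
    (extension hπ d c hsurj).deg (SRep ψ hψ) = c.deg (SRep ψ hψ) := by
  have lower (i : Fin d.n) : ¬GRep.Iso (GRep.subquot ρ ((extension hπ d c hsurj).inv i)
      ((extension hπ d c hsurj).inv (i + 1))) (SRep ψ hψ) :=
    not_iso_SRep_of_isSTrivial hψ hψne (Nat.lt_add_right c.n i.2) (isSTrivial_extension hker i.2)
  have upper (j : Fin c.n) := (iso_subquot_extension_add hπ d c hsurj j).congr (ω := SRep ψ hψ)
  simp only [deg, Finset.card_filter]
  refine (Fin.sum_univ_add (a := d.n) (b := c.n) _).trans ?_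
  simp only [Fin.val_castAdd, Fin.val_natAdd, lower, upper, if_false, Finset.sum_const_zero,
    zero_add]

theorem CompSeries.exists_deg_SRep_eq [FiniteDimensional ℂ (LinearMap.ker π)]
    (hψ : IsLocallyConstant ψ) (hψne : ψ ≠ 1) (hπ : GRep.Equivariant ρ σ π)
    (hsurj : Function.Surjective π) (hker : LinearMap.ker π ≤ sInv ρ) (c : CompSeries σ) :
    ∃ e : CompSeries ρ, e.deg (SRep ψ hψ) = c.deg (SRep ψ hψ) := by
  obtain ⟨d⟩ := nonempty_compSeries (GRep.sub ρ (GRep.ker_invariant ρ σ π hπ))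
  exact ⟨_, deg_extension_SRep hψ hψne hπ hsurj hker d c⟩

end Extension

section DegreeOne

open Aff

section Field

variable {K : Type*} [Field K] {X Y E : Type*} [AddCommGroup X] [Module ℂ X] [AddCommGroup Y]
variable [Module ℂ Y] [AddCommGroup E] [Module ℂ E] {τX : Representation ℂ Kˣ X}
variable {τY : Representation ℂ Kˣ Y} {ρE : Rep K E} {f : X →ₗ[ℂ] Y} {q : E →ₗ[ℂ] Y}

lemma prodRepTE_sS (b : K) (m : X × E) : prodRepTE τX ρE (sS b) m = (m.1, ρE (sS b) m.2) :=
  Prod.ext (by simp [prodRepTE]) rfl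

section Projections

variable (hF : GRep.Invariant (prodRepTE τX ρE) (fiberKer f q))

lemma equivariant_snd_fiberKer :
    GRep.Equivariant (GRep.sub (prodRepTE τX ρE) hF) ρE
      (LinearMap.snd ℂ X E ∘ₗ (fiberKer f q).subtype) :=
  fun _ _ ↦ rfl

lemma surjective_snd_fiberKer (hfsurj : Function.Surjective f) :
    Function.Surjective (LinearMap.snd ℂ X E ∘ₗ (fiberKer f q).subtype) := fun e ↦ by
  obtain ⟨x, hx⟩ := hfsurj (q e)
  exact ⟨⟨(x, e), (mem_fiberKer f q _).2 hx⟩, rfl⟩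

lemma ker_snd_fiberKer_le_sInv :
    LinearMap.ker (LinearMap.snd ℂ X E ∘ₗ (fiberKer f q).subtype) ≤
      sInv (GRep.sub (prodRepTE τX ρE) hF) := by
  intro m hm b
  have hm2 : m.1.2 = 0 := hm
  refine Subtype.ext ((prodRepTE_sS b m.1).trans (Prod.ext rfl ?_))
  exact (congrArg (ρE (sS b)) hm2).trans ((map_zero _).trans hm2.symm)

lemma finiteDimensional_ker_snd_fiberKer [FiniteDimensional ℂ X] :
    FiniteDimensional ℂ (LinearMap.ker (LinearMap.snd ℂ X E ∘ₗ (fiberKer f q).subtype)) := by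
  refine FiniteDimensional.of_injective ((LinearMap.fst ℂ X E ∘ₗ (fiberKer f q).subtype).domRestrict
    (LinearMap.ker (LinearMap.snd ℂ X E ∘ₗ (fiberKer f q).subtype)))
    fun m m' h ↦ Subtype.ext (Subtype.ext (Prod.ext h ?_))
  exact m.2.trans m'.2.symm

theorem sInvT_fiberKer_iso (hf : GRep.Equivariant τX τY f) (hEinv : sInv ρE = ⊥) :
    GRep.Iso (sInvT (GRep.sub (prodRepTE τX ρE) hF))
      (GRep.sub τX (GRep.ker_invariant τX τY f hf)) := by
  let F := GRep.sub (prodRepTE τX ρE) hF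
  have snd_eq_zero (m : sInv F) : m.1.1.2 = 0 := by
    refine (Submodule.mem_bot ℂ).1 (hEinv ▸ fun b ↦ ?_)
    exact congrArg (fun m : fiberKer f q ↦ m.1.2) (m.2 b)
  let a := LinearMap.fst ℂ X E ∘ₗ (fiberKer f q).subtype ∘ₗ (sInv F).subtype
  have ha : GRep.Equivariant (sInvT F) τX a := fun _ _ ↦ rfl
  have hsub : GRep.Equivariant (GRep.sub τX (GRep.ker_invariant τX τY f hf)) τX
      (LinearMap.ker f).subtype := fun _ _ ↦ rfl
  refine GRep.iso_of_range_eq ha hsub (fun m m' h ↦ ?_) Subtype.val_injective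
    (le_antisymm ?_ ?_)
  · exact Subtype.ext (Subtype.ext (Prod.ext h ((snd_eq_zero m).trans (snd_eq_zero m').symm)))
  · rintro _ ⟨m, rfl⟩
    rw [Submodule.range_subtype, LinearMap.mem_ker]
    exact ((mem_fiberKer f q _).1 m.1.2).trans (by rw [snd_eq_zero, map_zero])
  · rintro _ ⟨⟨x, hx⟩, rfl⟩
    have hx0 : (x, 0) ∈ fiberKer f q := (mem_fiberKer f q _).2 (hx.trans (map_zero q).symm)
    exact ⟨⟨⟨(x, 0), hx0⟩, ker_snd_fiberKer_le_sInv hF rfl⟩, rfl⟩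

theorem isPiZero_fst_fiberKer (hfsurj : Function.Surjective f) (hq : IsPiZero ρE τY q) :
    IsPiZero (GRep.sub (prodRepTE τX ρE) hF) τX
      (LinearMap.fst ℂ X E ∘ₗ (fiberKer f q).subtype) := by
  have hle : sCoinvKer (GRep.sub (prodRepTE τX ρE) hF) ≤
      LinearMap.ker (LinearMap.fst ℂ X E ∘ₗ (fiberKer f q).subtype) := by
    refine sCoinvKer_le_iff.2 fun b m ↦ LinearMap.sub_mem_ker_iff.2 ?_
    exact (congrArg Prod.fst (prodRepTE_sS (τX := τX) (ρE := ρE) b m.1) :)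
  refine ⟨fun x ↦ ?_, le_antisymm (fun m hm ↦ ?_) hle, fun _ _ ↦ rfl⟩
  · obtain ⟨e, he⟩ := hq.surjective (f x)
    exact ⟨⟨(x, e), (mem_fiberKer f q _).2 he.symm⟩, rfl⟩
  · have hm1 : m.1.1 = 0 := hm
    have hm2 : m.1.2 ∈ sCoinvKer ρE := by
      rw [← hq.ker_eq, LinearMap.mem_ker, ← (mem_fiberKer f q _).1 m.2, hm1, map_zero]
    rw [← map_sCoinvKer (equivariant_snd_fiberKer hF) (surjective_snd_fiberKer hfsurj)] at hm2
    obtain ⟨m', hm', h⟩ := hm2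
    rwa [← show m' = m from Subtype.ext (Prod.ext ((hle hm').trans hm1.symm) h)]

end Projections

end Field

variable {K : Type*} [NontriviallyNormedField K] {ψ : AddChar K ℂ}
variable {X Y E : Type*} [AddCommGroup X] [Module ℂ X] [FiniteDimensional ℂ X] [AddCommGroup Y]
variable [Module ℂ Y] [AddCommGroup E] [Module ℂ E] {τX : Representation ℂ Kˣ X}
variable {ρE : Rep K E} {f : X →ₗ[ℂ] Y} {q : E →ₗ[ℂ] Y}

theorem exists_compSeries_fiberKer_deg_eq (hψ : IsLocallyConstant ψ) (hψne : ψ ≠ 1)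
    (hF : GRep.Invariant (prodRepTE τX ρE) (fiberKer f q)) (hfsurj : Function.Surjective f)
    (c : CompSeries ρE) : ∃ cF : CompSeries (GRep.sub (prodRepTE τX ρE) hF),
      cF.deg (SRep ψ hψ) = c.deg (SRep ψ hψ) := by
  have := finiteDimensional_ker_snd_fiberKer (f := f) (q := q)
  exact CompSeries.exists_deg_SRep_eq hψ hψne (equivariant_snd_fiberKer hF)
    (surjective_snd_fiberKer hfsurj) (ker_snd_fiberKer_le_sInv hF) c

end DegreeOne

section Statements

open Aff

variable {K : Type*} [NontriviallyNormedField K] [IsUltrametricDist K] [ProperSpace K]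

theorem statement12_general
    (ψ : AddChar K ℂ) (hψlc : IsLocallyConstant (⇑ψ)) (hψne : ψ ≠ 1)
    {X Y E : Type*} [AddCommGroup X] [Module ℂ X] [Module.Finite ℂ X]
    [AddCommGroup Y] [Module ℂ Y]
    [AddCommGroup E] [Module ℂ E]
    (τX : Representation ℂ Kˣ X)
    (τY : Representation ℂ Kˣ Y)
    (f : X →ₗ[ℂ] Y) (hf : ∀ (u : Kˣ) (x : X), f (τX u x) = τY u (f x))
    (hfsurj : Function.Surjective f)
    (ρE : Rep K E) (hρE : IsSmoothRep ρE) (cE : CompSeries ρE)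
    (hEdeg : cE.deg (SRep ψ hψlc) = 1) (hEperf : Perfect ρE)
    (q : E →ₗ[ℂ] Y) (hqsurj : Function.Surjective q)
    (hqker : LinearMap.ker q = sCoinvKer ρE)
    (hqT : ∀ (u : Kˣ) (v : E), q (ρE (xT u) v) = τY u (q v)) :
    (∃ cF : CompSeries (GRep.sub (prodRepTE τX ρE)
        (fiber_invariant τX ρE τY f q hf hqker.ge hqT)),
      cF.deg (SRep ψ hψlc) = 1) ∧
    GRep.Iso
      (sInvT (GRep.sub (prodRepTE τX ρE) (fiber_invariant τX ρE τY f q hf hqker.ge hqT)))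
      (GRep.sub τX (GRep.ker_invariant τX τY f hf)) ∧
    GRep.Iso
      (piZeroT (GRep.sub (prodRepTE τX ρE) (fiber_invariant τX ρE τY f q hf hqker.ge hqT)))
      τX ∧
    (∀ (V : Type*) [AddCommGroup V] [Module ℂ V] (ρM : Rep K V), IsSmoothRep ρM →
      ∀ cM : CompSeries ρM, cM.deg (SRep ψ hψlc) = 1 →
      TCyclic (GRep.quot (piZeroT ρM) ((sInv ρM).map (sCoinvKer ρM).mkQ)
        (kappaImg_invariant ρM)) ∧
      ∀ (E' : Type*) [AddCommGroup E'] [Module ℂ E'] (ρE' : Rep K E'), IsSmoothRep ρE' →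
        ∀ cE' : CompSeries ρE', cE'.deg (SRep ψ hψlc) = 1 → Perfect ρE' →
        ∀ q' : E' →ₗ[ℂ] ((V ⧸ sCoinvKer ρM) ⧸ (sInv ρM).map (sCoinvKer ρM).mkQ),
          Function.Surjective q' →
          ∀ hq'ker : LinearMap.ker q' = sCoinvKer ρE',
          ∀ hq'T : (∀ (u : Kˣ) (v : E'), q' (ρE' (xT u) v)
              = GRep.quot (piZeroT ρM) ((sInv ρM).map (sCoinvKer ρM).mkQ)
                  (kappaImg_invariant ρM) u (q' v)),
          GRep.Iso ρM (GRep.sub (prodRepTE (piZeroT ρM) ρE')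
            (fiber_invariant (piZeroT ρM) ρE'
              (GRep.quot (piZeroT ρM) ((sInv ρM).map (sCoinvKer ρM).mkQ)
                (kappaImg_invariant ρM))
              ((sInv ρM).map (sCoinvKer ρM).mkQ).mkQ q'
              (GRep.mkQ_equivariant (piZeroT ρM) _ (kappaImg_invariant ρM))
              hq'ker.ge hq'T))) := by
  have hF := fiber_invariant τX ρE τY f q hf hqker.ge hqT
  have hq : IsPiZero ρE τY q := ⟨hqsurj, hqker, hqT⟩
  refine ⟨?_, ?_, (isPiZero_fst_fiberKer hF hfsurj hq).iso, fun V _ _ ρM hρM cM hMdeg ↦ ?_⟩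
  · obtain ⟨cF, hcF⟩ := exists_compSeries_fiberKer_deg_eq hψlc hψne hF hfsurj cE
    exact ⟨cF, hcF.trans hEdeg⟩
  · exact sInvT_fiberKer_iso hF hf (hEperf.sInv_eq_bot hρE.smooth cE)
  · have := cM.finiteDimensional_quotient_sCoinvKer hρM.smooth
    have hp := isPiZero_mkQ ρM
    refine ⟨tCyclic_quot_sInv hψlc hψne hρM.smooth hMdeg hp _, ?_⟩
    intro E' _ _ ρE' hρE' cE' hE'deg hE'perf q' hq'surj hq'ker hq'T
    exact iso_fiberKer hψlc hψne hρM.smooth hMdeg hp (GRep.mkQ_equivariant _ _ _)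
      (Submodule.mkQ_surjective _) (Submodule.ker_mkQ _) hρE'.smooth hE'deg
      (hE'perf.sInv_eq_bot hρE'.smooth cE') ⟨hq'surj, hq'ker, hq'T⟩

theorem statement12
    (hchar : (2 : K) ≠ 0)
    (ψ : AddChar K ℂ) (hψlc : IsLocallyConstant (⇑ψ)) (hψne : ψ ≠ 1)
    {X Y E : Type*} [AddCommGroup X] [Module ℂ X] [Module.Finite ℂ X]
    [AddCommGroup Y] [Module ℂ Y] [Module.Finite ℂ Y]
    [AddCommGroup E] [Module ℂ E]
    (τX : Representation ℂ Kˣ X) (hτX : TIsSmooth τX)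
    (τY : Representation ℂ Kˣ Y) (hτY : TIsSmooth τY) (hYcyc : TCyclic τY)
    (f : X →ₗ[ℂ] Y) (hf : ∀ (u : Kˣ) (x : X), f (τX u x) = τY u (f x))
    (hfsurj : Function.Surjective f)
    (ρE : Rep K E) (hρE : IsSmoothRep ρE) (cE : CompSeries ρE)
    (hEdeg : cE.deg (SRep ψ hψlc) = 1) (hEperf : Perfect ρE)
    (q : E →ₗ[ℂ] Y) (hqsurj : Function.Surjective q)
    (hqker : LinearMap.ker q = sCoinvKer ρE)
    (hqT : ∀ (u : Kˣ) (v : E), q (ρE (xT u) v) = τY u (q v)) :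
    (∃ cF : CompSeries (GRep.sub (prodRepTE τX ρE)
        (fiber_invariant τX ρE τY f q hf hqker.ge hqT)),
      cF.deg (SRep ψ hψlc) = 1) ∧
    GRep.Iso
      (sInvT (GRep.sub (prodRepTE τX ρE) (fiber_invariant τX ρE τY f q hf hqker.ge hqT)))
      (GRep.sub τX (GRep.ker_invariant τX τY f hf)) ∧
    GRep.Iso
      (piZeroT (GRep.sub (prodRepTE τX ρE) (fiber_invariant τX ρE τY f q hf hqker.ge hqT)))
      τX ∧
    (∀ (V : Type) [AddCommGroup V] [Module ℂ V] (ρM : Rep K V), IsSmoothRep ρM →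
      ∀ cM : CompSeries ρM, cM.deg (SRep ψ hψlc) = 1 →
      TCyclic (GRep.quot (piZeroT ρM) ((sInv ρM).map (sCoinvKer ρM).mkQ)
        (kappaImg_invariant ρM)) ∧
      ∀ (E' : Type) [AddCommGroup E'] [Module ℂ E'] (ρE' : Rep K E'), IsSmoothRep ρE' →
        ∀ cE' : CompSeries ρE', cE'.deg (SRep ψ hψlc) = 1 → Perfect ρE' →
        ∀ q' : E' →ₗ[ℂ] ((V ⧸ sCoinvKer ρM) ⧸ (sInv ρM).map (sCoinvKer ρM).mkQ),
          Function.Surjective q' →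
          ∀ hq'ker : LinearMap.ker q' = sCoinvKer ρE',
          ∀ hq'T : (∀ (u : Kˣ) (v : E'), q' (ρE' (xT u) v)
              = GRep.quot (piZeroT ρM) ((sInv ρM).map (sCoinvKer ρM).mkQ)
                  (kappaImg_invariant ρM) u (q' v)),
          GRep.Iso ρM (GRep.sub (prodRepTE (piZeroT ρM) ρE')
            (fiber_invariant (piZeroT ρM) ρE'
              (GRep.quot (piZeroT ρM) ((sInv ρM).map (sCoinvKer ρM).mkQ)
                (kappaImg_invariant ρM))
              ((sInv ρM).map (sCoinvKer ρM).mkQ).mkQ q'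
              (GRep.mkQ_equivariant (piZeroT ρM) _ (kappaImg_invariant ρM))
              hq'ker.ge hq'T))) := by
  exact statement12_general ψ hψlc hψne τX τY f hf hfsurj ρE hρE cE hEdeg hEperf q hqsurj hqker hqT

end Statements

end PSW
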